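/- arXiv:1603.02328 — 2 statements merged into one kernel-verified Lean document; each statement's English description precedes it below -/
import Mathlib

section
/- Let F be the free group of finite rank q on the basis x₁, …, x_q. Then the automorphism group Aut(F) is generated by the elementary Nielsen transformation automorphisms: for each i, the automorphism sending x_i ↦ x_i⁻¹ and fixing x_k for k ≠ i, and for each pair i ≠ j, the automorphism sending x_i ↦ x_i x_j and fixing x_k for k ≠ i. That is, the subgroup of Aut(F) generated by these automorphisms is all of Aut(F). -/
namespace FreeGroup

section Cancellation

variable {α : Type*}

theorem IsReduced.invRev {L : List (α × Bool)} (h : IsReduced L) : IsReduced (invRev L) := by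
  classical
  rw [isReduced_iff_reduce_eq] at h ⊢
  rw [reduce_invRev, h]

theorem IsReduced.exists_common_prefix {L M : List (α × Bool)} (hL : IsReduced L)
    (hM : IsReduced M) :
    ∃ p a b, L = p ++ a ∧ M = p ++ b ∧ IsReduced (FreeGroup.invRev a ++ b) := by
  induction L generalizing M with
  | nil => exact ⟨[], [], M, by simpa using hM⟩
  | cons x xs ih =>
    cases M with
    | nil => exact ⟨[], x :: xs, [], by simpa using hL.invRev⟩
    | cons y ys =>
      by_cases hxy : x = y
      · subst hxy
        obtain ⟨p, a, b, rfl, rfl, h⟩ := ih hL.of_cons hM.of_cons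
        exact ⟨x :: p, a, b, rfl, rfl, h⟩
      · refine ⟨[], x :: xs, y :: ys, rfl, rfl, ?_⟩
        refine List.IsChain.append hL.invRev hM ?_
        intro u hu v hv
        obtain ⟨x₁, x₂⟩ := x
        obtain ⟨y₁, y₂⟩ := y
        simp [FreeGroup.invRev] at hu hv
        subst hu hv
        rintro rfl
        cases x₂ <;> cases y₂ <;> simp_all

variable [DecidableEq α]

theorem exists_toWord_inv_mul (g h : FreeGroup α) :
    ∃ p a b, g.toWord = p ++ a ∧ h.toWord = p ++ b ∧ (g⁻¹ * h).toWord = invRev a ++ b := by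
  obtain ⟨p, a, b, hg, hh, hr⟩ :=
    (isReduced_toWord (x := g)).exists_common_prefix (isReduced_toWord (x := h))
  refine ⟨p, a, b, hg, hh, ?_⟩
  rw [← hr.reduce_eq, ← toWord_mk, toWord_inj, ← mk_toWord (x := g), ← mk_toWord (x := h), hg, hh]
  simp only [← mul_mk, ← inv_mk]
  group

/-- The Gromov product of two elements of a free group, based at `1`. It is the length of
the longest common prefix of their reduced words. -/
def gromovProd (g h : FreeGroup α) : ℕ := (norm g + norm h - norm (g⁻¹ * h)) / 2

theorem gromovProd_eq_length {g h : FreeGroup α} {p a b : List (α × Bool)}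
    (hg : g.toWord = p ++ a) (hh : h.toWord = p ++ b)
    (hgh : (g⁻¹ * h).toWord = invRev a ++ b) : gromovProd g h = p.length := by
  simp only [gromovProd, norm, hg, hh, hgh, List.length_append, invRev_length]
  omega

theorem norm_inv_mul_add (g h : FreeGroup α) :
    norm (g⁻¹ * h) + 2 * gromovProd g h = norm g + norm h := by
  obtain ⟨p, a, b, hg, hh, hgh⟩ := exists_toWord_inv_mul g h
  rw [gromovProd_eq_length hg hh hgh]
  simp only [norm, hg, hh, hgh, List.length_append, invRev_length]
  omega

theorem norm_mul_add (g h : FreeGroup α) :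
    norm (g * h) + 2 * gromovProd g⁻¹ h = norm g + norm h := by
  simpa using norm_inv_mul_add g⁻¹ h

theorem gromovProd_comm (g h : FreeGroup α) : gromovProd g h = gromovProd h g := by
  have h₁ := norm_inv_mul_add g h
  have h₂ := norm_inv_mul_add h g
  have h₃ : norm (g⁻¹ * h) = norm (h⁻¹ * g) := by rw [← norm_inv_eq]; simp
  omega

theorem le_gromovProd_iff {g h : FreeGroup α} {k : ℕ} :
    k ≤ gromovProd g h ↔
      k ≤ norm g ∧ k ≤ norm h ∧ g.toWord.take k = h.toWord.take k := by
  obtain ⟨p, a, b, hg, hh, hgh⟩ := exists_toWord_inv_mul g h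
  rw [gromovProd_eq_length hg hh hgh]
  simp only [norm, hg, hh]
  constructor
  · intro hk
    refine ⟨by simp; omega, by simp; omega, ?_⟩
    rw [List.take_append_of_le_length hk, List.take_append_of_le_length hk]
  · rintro ⟨hka, hkb, ht⟩
    by_contra! hlt
    cases a with
    | nil => simp at hka; omega
    | cons x xs =>
    cases b with
    | nil => simp at hkb; omega
    | cons y ys =>
    obtain ⟨m, rfl⟩ := Nat.exists_eq_add_of_lt hlt
    rw [add_assoc, List.take_length_add_append, List.take_length_add_append] at ht
    simp only [List.take_succ_cons, List.append_cancel_left_eq, List.cons.injEq] at ht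
    obtain ⟨rfl, -⟩ := ht
    have hr := isReduced_toWord (x := g⁻¹ * h)
    rw [hgh] at hr
    have h2 : IsReduced [(x.1, !x.2), x] := hr.infix ⟨invRev xs, ys, by simp [invRev]⟩
    simp at h2

theorem min_gromovProd_le (g h k : FreeGroup α) :
    min (gromovProd g h) (gromovProd h k) ≤ gromovProd g k := by
  obtain ⟨h₁, -, h₂⟩ := le_gromovProd_iff.1 (min_le_left (gromovProd g h) (gromovProd h k))
  obtain ⟨-, h₃, h₄⟩ := le_gromovProd_iff.1 (min_le_right (gromovProd g h) (gromovProd h k))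
  exact le_gromovProd_iff.2 ⟨h₁, h₃, h₂.trans h₄⟩

theorem norm_lt_norm_mul_self {g : FreeGroup α} (hg : g ≠ 1) : norm g < norm (g * g) := by
  by_contra! hle
  obtain ⟨p, a, b, hi, hs, hm⟩ := exists_toWord_inv_mul g⁻¹ g
  have hi' : g.toWord = invRev a ++ invRev p := by
    rw [← invRev_append, ← hi, toWord_inv, invRev_invRev]
  rw [inv_inv] at hm
  simp only [norm, hm, hs, List.length_append, invRev_length] at hle
  have hab : a.length = b.length := by
    have := congrArg List.length (hs.symm.trans hi')
    simp at this
    omega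
  have hpre : invRev a <+: p := by
    refine List.prefix_of_prefix_length_le (l₃ := g.toWord) ?_ ?_ (by simp; omega)
    · exact ⟨_, hi'.symm⟩
    · exact ⟨_, hs.symm⟩
  obtain ⟨s, rfl⟩ := hpre
  have : b = a := by
    rw [hs, invRev_append, invRev_invRev, ← List.append_assoc] at hi'
    exact (List.append_inj' hi' hab.symm).2
  subst this
  apply hg
  rw [← pow_eq_one_iff_left two_ne_zero, sq, ← mk_toWord (x := g * g), hm, ← mul_mk, ← inv_mk,
    inv_mul_cancel]

end Cancellation

section Weight

variable {α : Type*} [Fintype α]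

variable (α) in
/-- The base used by `FreeGroup.wordValue`. -/
def wordBase : ℕ := Fintype.card (α × Bool) + 2

/-- The digits read off a word, least significant first. -/
noncomputable def wordDigits (L : List (α × Bool)) : List ℕ :=
  (L.map fun x ↦ (Fintype.equivFin (α × Bool) x : ℕ) + 1).reverse

theorem length_wordDigits (L : List (α × Bool)) : (wordDigits L).length = L.length := by
  simp [wordDigits]

theorem lt_wordBase_of_mem_wordDigits {L : List (α × Bool)} {n : ℕ} (hn : n ∈ wordDigits L) :
    n < wordBase α := by
  simp only [wordDigits, List.mem_reverse, List.mem_map] at hn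
  obtain ⟨x, -, rfl⟩ := hn
  have := (Fintype.equivFin (α × Bool) x).isLt
  rw [wordBase]
  omega

theorem one_lt_wordBase : 1 < wordBase α := by simp [wordBase]

/-- The number represented by a word, its letters being read as nonzero digits in base
`wordBase α`, most significant digit first. -/
noncomputable def wordValue (L : List (α × Bool)) : ℕ := Nat.ofDigits (wordBase α) (wordDigits L)

theorem wordValue_append (L M : List (α × Bool)) :
    wordValue (L ++ M) = wordValue L * wordBase α ^ M.length + wordValue M := by
  simp only [wordValue, wordDigits, List.map_append, List.reverse_append, Nat.ofDigits_append,
    List.length_reverse, List.length_map]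
  ring

theorem wordValue_lt (L : List (α × Bool)) : wordValue L < wordBase α ^ L.length := by
  rw [← length_wordDigits]
  exact Nat.ofDigits_lt_base_pow_length one_lt_wordBase fun _ ↦ lt_wordBase_of_mem_wordDigits

theorem pow_length_le_wordValue_cons (x : α × Bool) (L : List (α × Bool)) :
    wordBase α ^ L.length ≤ wordValue (x :: L) := by
  rw [← List.singleton_append, wordValue_append]
  refine le_add_right (Nat.le_mul_of_pos_left _ ?_)
  simp [wordValue, wordDigits]

theorem wordValue_injective_of_length_eq {L M : List (α × Bool)} (hlen : L.length = M.length)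
    (h : wordValue L = wordValue M) : L = M := by
  have := Nat.ofDigits_inj_of_len_eq one_lt_wordBase (by simpa [length_wordDigits] using hlen)
    (fun _ ↦ lt_wordBase_of_mem_wordDigits) (fun _ ↦ lt_wordBase_of_mem_wordDigits) h
  rw [wordDigits, wordDigits, List.reverse_inj] at this
  refine List.map_injective_iff.2 ?_ this
  intro x y hxy
  simpa [Fin.val_inj] using hxy

variable [DecidableEq α]

/-- A refinement of the norm on a free group of finite rank, which breaks ties using the values
of the reduced words of an element and of its inverse. -/
noncomputable def weight (g : FreeGroup α) : ℕ := wordValue g.toWord + wordValue g⁻¹.toWord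

theorem weight_inv (g : FreeGroup α) : weight g⁻¹ = weight g := by
  simp [weight, add_comm]

theorem weight_lt_of_norm_lt {g h : FreeGroup α} (hlt : norm g < norm h) :
    weight g < weight h := by
  have key (L M : List (α × Bool)) (hLM : L.length < M.length) : wordValue L < wordValue M := by
    cases M with
    | nil => simp at hLM
    | cons x M =>
      refine (wordValue_lt L).trans_le (le_trans ?_ (pow_length_le_wordValue_cons x M))
      exact Nat.pow_le_pow_right one_lt_wordBase.le (by simpa [Nat.lt_succ_iff] using hLM)
  refine add_lt_add (key _ _ hlt) (key _ _ ?_)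
  rwa [← norm, ← norm, norm_inv_eq, norm_inv_eq]

/-- If half of `h` cancels in `g * h`, the length is unchanged but the end of `g` is replaced by
the second half of `h`. -/
theorem weight_mul_lt {g h : FreeGroup α} (hcancel : 2 * gromovProd g⁻¹ h = norm h)
    (hle : norm h ≤ norm g) (hval : wordValue h⁻¹.toWord < wordValue h.toWord) :
    weight (g * h) < weight g := by
  obtain ⟨p, a, b, hg, hh, hgh⟩ := exists_toWord_inv_mul g⁻¹ h
  rw [gromovProd_eq_length hg hh hgh] at hcancel
  have hg' : g.toWord = invRev a ++ invRev p := by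
    rw [← invRev_append, ← hg, toWord_inv, invRev_invRev]
  have hgh' : (g * h)⁻¹.toWord = invRev b ++ a := by
    rw [toWord_inv, ← inv_inv g, hgh, invRev_append, invRev_invRev]
  rw [inv_inv] at hgh
  have hpb : b.length = p.length := by
    simp only [norm, hh, List.length_append] at hcancel
    omega
  have hpa : p.length ≤ a.length := by
    simp only [norm, hh, hg', List.length_append, invRev_length] at hle
    omega
  have hlt : wordValue (invRev b) < wordValue p := by
    refine lt_of_le_of_ne ?_ fun heq ↦ ?_
    · by_contra! hgt
      rw [toWord_inv, hh, invRev_append, wordValue_append, wordValue_append, invRev_length,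
        hpb] at hval
      have h₁ := wordValue_lt b
      rw [hpb] at h₁
      have h₂ := Nat.mul_le_mul_right (wordBase α ^ p.length) (Nat.succ_le_of_lt hgt)
      rw [Nat.succ_mul] at h₂
      omega
    · have hbp := wordValue_injective_of_length_eq (by simpa using hpb) heq
      rw [toWord_inv, hh, ← hbp, invRev_append, invRev_invRev] at hval
      exact lt_irrefl _ hval
  simp only [weight, hg, hg', hgh, hgh', wordValue_append, invRev_length, hpb]
  have h₁ := wordValue_lt b
  have h₂ : wordBase α ^ b.length ≤ wordBase α ^ a.length :=
    Nat.pow_le_pow_right one_lt_wordBase.le (by omega)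
  have h₃ := Nat.mul_le_mul_right (wordBase α ^ a.length) (Nat.succ_le_of_lt hlt)
  rw [Nat.succ_mul] at h₃
  omega

theorem wordValue_inv_ne {g : FreeGroup α} (hg : g ≠ 1) :
    wordValue g⁻¹.toWord ≠ wordValue g.toWord := by
  intro h
  have h' := toWord_injective (wordValue_injective_of_length_eq (by simp) h)
  exact hg (by rwa [inv_eq_self] at h')

end Weight

section Reduced

variable {α : Type*}

theorem inv_mk_singleton (a : α × Bool) : (mk [a])⁻¹ = mk [(a.1, !a.2)] := by
  simp [inv_mk, invRev]

theorem IsReduced.pair_inv {a b : α × Bool} (h : IsReduced [a, b]) :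
    IsReduced [(b.1, !b.2), (a.1, !a.2)] := by
  simpa [FreeGroup.invRev] using h.invRev

variable [DecidableEq α]

theorem mk_singleton_ne_one (a : α × Bool) : mk [a] ≠ 1 := by
  rw [Ne, ← toWord_eq_nil_iff, toWord_mk, reduce_singleton]
  simp

theorem exists_mk_singleton_of_norm_eq_one {g : FreeGroup α} (hg : norm g = 1) :
    ∃ a, g = mk [a] := by
  obtain ⟨a, ha⟩ := List.length_eq_one_iff.1 hg
  exact ⟨a, by rw [← ha, mk_toWord]⟩

variable {φ : FreeGroup α →* FreeGroup α}

/-- If the images of the letters satisfy Nielsen's cancellation conditions, the norm of the image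
of a reduced word grows with its length. -/
theorem length_le_norm_map (hne : ∀ a, φ (mk [a]) ≠ 1)
    (hpair : ∀ a b, IsReduced [a, b] →
      2 * gromovProd (φ (mk [a]))⁻¹ (φ (mk [b])) ≤ norm (φ (mk [b])))
    (htriple : ∀ a b c, IsReduced [a, b] → IsReduced [b, c] →
      gromovProd (φ (mk [a]))⁻¹ (φ (mk [b])) + gromovProd (φ (mk [b]))⁻¹ (φ (mk [c])) <
        norm (φ (mk [b]))) (L : List (α × Bool)) (hL : IsReduced L) :
    L.length ≤ norm (φ (mk L)) := by
  have key (L : List (α × Bool)) : ∀ a, IsReduced (a :: L) →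
      (∀ b, IsReduced [b, a] → gromovProd (φ (mk [b]))⁻¹ (φ (mk [a])) <
        gromovProd (φ (mk (a :: L))) (φ (mk [a]))) ∧
      L.length + gromovProd (φ (mk (a :: L))) (φ (mk [a])) ≤ norm (φ (mk (a :: L))) := by
    induction L with
    | nil =>
      intro a _
      have h₁ := norm_inv_mul_add (φ (mk [a])) (φ (mk [a]))
      have h₂ := mt norm_eq_zero.1 (hne a)
      simp only [inv_mul_cancel, norm_one] at h₁
      refine ⟨fun b hb ↦ ?_, by simp; omega⟩
      have := hpair b a hb
      omega
    | cons c L ih =>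
      intro a ha
      obtain ⟨hac, hcL⟩ := isReduced_cons_cons.1 ha
      have hac : IsReduced [a, c] := by simpa using hac
      obtain ⟨ih₁, ih₂⟩ := ih c hcL
      have hlt := ih₁ a hac
      have hsplit : φ (mk (a :: c :: L)) = φ (mk [a]) * φ (mk (c :: L)) := by
        rw [← _root_.map_mul, mul_mk]; rfl
      rw [hsplit]
      set P := φ (mk (c :: L))
      have h₁ := min_gromovProd_le (φ (mk [a]))⁻¹ P (φ (mk [c]))
      have h₂ : gromovProd (φ (mk [a]))⁻¹ P ≤ gromovProd (φ (mk [a]))⁻¹ (φ (mk [c])) := by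
        omega
      have h₃ := norm_mul_add (φ (mk [a])) P
      have h₄ := norm_inv_mul_add (φ (mk [a]) * P) (φ (mk [a]))
      have h₅ : ((φ (mk [a]) * P)⁻¹ * φ (mk [a])) = P⁻¹ := by group
      rw [h₅, norm_inv_eq] at h₄
      refine ⟨fun b hb ↦ ?_, by simp only [List.length_cons]; omega⟩
      have := htriple b a c hb hac
      omega
  cases L with
  | nil => simp
  | cons a L =>
    obtain ⟨h₁, h₂⟩ := key L a hL
    have := h₁ a (by simp)
    simp only [List.length_cons]
    omega

theorem map_mk_singleton_ne_one (hφ : Function.Injective φ) (a : α × Bool) : φ (mk [a]) ≠ 1 :=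
  fun h ↦ mk_singleton_ne_one a (hφ (h.trans (_root_.map_one φ).symm))

theorem gromovProd_map_pair_inv (φ : FreeGroup α →* FreeGroup α) (a b : α × Bool) :
    gromovProd (φ (mk [(b.1, !b.2)]))⁻¹ (φ (mk [(a.1, !a.2)])) =
      gromovProd (φ (mk [a]))⁻¹ (φ (mk [b])) := by
  rw [← inv_mk_singleton, ← inv_mk_singleton, _root_.map_inv, _root_.map_inv, inv_inv,
    gromovProd_comm]

variable [Fintype α]

theorem norm_le_norm_map_mul (hφ : Function.Injective φ)
    (hmin : ∀ a b : α × Bool, a.1 ≠ b.1 → weight (φ (mk [a])) ≤ weight (φ (mk [a] * mk [b])))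
    {a b : α × Bool} (hab : IsReduced [a, b]) :
    norm (φ (mk [a])) ≤ norm (φ (mk [a]) * φ (mk [b])) := by
  by_cases h : a.1 = b.1
  · obtain rfl : a = b := Prod.ext h ((isReduced_cons_cons.1 hab).1 h)
    exact (norm_lt_norm_mul_self (map_mk_singleton_ne_one hφ a)).le
  · by_contra! hlt
    rw [← _root_.map_mul] at hlt
    exact (hmin a b h).not_gt (weight_lt_of_norm_lt hlt)

theorem two_mul_gromovProd_le_right (hφ : Function.Injective φ)
    (hmin : ∀ a b : α × Bool, a.1 ≠ b.1 → weight (φ (mk [a])) ≤ weight (φ (mk [a] * mk [b])))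
    {a b : α × Bool} (hab : IsReduced [a, b]) :
    2 * gromovProd (φ (mk [a]))⁻¹ (φ (mk [b])) ≤ norm (φ (mk [b])) := by
  have h₁ := norm_le_norm_map_mul hφ hmin hab
  have h₂ := norm_mul_add (φ (mk [a])) (φ (mk [b]))
  omega

theorem two_mul_gromovProd_le_left (hφ : Function.Injective φ)
    (hmin : ∀ a b : α × Bool, a.1 ≠ b.1 → weight (φ (mk [a])) ≤ weight (φ (mk [a] * mk [b])))
    {a b : α × Bool} (hab : IsReduced [a, b]) :
    2 * gromovProd (φ (mk [a]))⁻¹ (φ (mk [b])) ≤ norm (φ (mk [a])) := by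
  have h := two_mul_gromovProd_le_right hφ hmin hab.pair_inv
  rwa [gromovProd_map_pair_inv, ← inv_mk_singleton, _root_.map_inv, norm_inv_eq] at h

theorem wordValue_le_of_half_cancel (hφ : Function.Injective φ)
    (hmin : ∀ a b : α × Bool, a.1 ≠ b.1 → weight (φ (mk [a])) ≤ weight (φ (mk [a] * mk [b])))
    {a b : α × Bool} (hab : IsReduced [a, b])
    (hcancel : 2 * gromovProd (φ (mk [a]))⁻¹ (φ (mk [b])) = norm (φ (mk [b]))) :
    wordValue (φ (mk [b])).toWord ≤ wordValue (φ (mk [b]))⁻¹.toWord := by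
  by_contra! hlt
  have hle := two_mul_gromovProd_le_left hφ hmin hab
  have hw := weight_mul_lt hcancel (by omega) hlt
  by_cases h : a.1 = b.1
  · obtain rfl : a = b := Prod.ext h ((isReduced_cons_cons.1 hab).1 h)
    have h₁ := norm_lt_norm_mul_self (map_mk_singleton_ne_one hφ a)
    have h₂ := norm_mul_add (φ (mk [a])) (φ (mk [a]))
    omega
  · rw [← _root_.map_mul] at hw
    exact (hmin a b h).not_gt hw

theorem gromovProd_add_gromovProd_lt (hφ : Function.Injective φ)
    (hmin : ∀ a b : α × Bool, a.1 ≠ b.1 → weight (φ (mk [a])) ≤ weight (φ (mk [a] * mk [b])))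
    {a b c : α × Bool} (hab : IsReduced [a, b]) (hbc : IsReduced [b, c]) :
    gromovProd (φ (mk [a]))⁻¹ (φ (mk [b])) + gromovProd (φ (mk [b]))⁻¹ (φ (mk [c])) <
      norm (φ (mk [b])) := by
  have h₁ := two_mul_gromovProd_le_right hφ hmin hab
  have h₂ := two_mul_gromovProd_le_left hφ hmin hbc
  by_contra! hle
  have h₃ := wordValue_le_of_half_cancel hφ hmin hab (by omega)
  have h₄ := wordValue_le_of_half_cancel hφ hmin hbc.pair_inv (by
    rw [gromovProd_map_pair_inv, ← inv_mk_singleton, _root_.map_inv, norm_inv_eq]; omega)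
  rw [← inv_mk_singleton, _root_.map_inv, inv_inv] at h₄
  exact wordValue_inv_ne (map_mk_singleton_ne_one hφ b) (h₄.antisymm h₃)

/-- An injective endomorphism whose weight cannot be lowered by an elementary Nielsen
transformation does not decrease the norm. -/
theorem norm_le_norm_map (hφ : Function.Injective φ)
    (hmin : ∀ a b : α × Bool, a.1 ≠ b.1 → weight (φ (mk [a])) ≤ weight (φ (mk [a] * mk [b])))
    (g : FreeGroup α) : norm g ≤ norm (φ g) := by
  conv_rhs => rw [← mk_toWord (x := g)]
  exact length_le_norm_map (map_mk_singleton_ne_one hφ)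
    (fun _ _ ↦ two_mul_gromovProd_le_right hφ hmin)
    (fun _ _ _ ↦ gromovProd_add_gromovProd_lt hφ hmin) _ isReduced_toWord

end Reduced

section Nielsen

variable {α : Type*}

variable (α) in
/-- The elementary Nielsen automorphisms: inversion of one generator, and right multiplication of
one generator by another. -/
def elementaryNielsen : Set (MulAut (FreeGroup α)) :=
  { φ | (∃ i, φ (of i) = (of i)⁻¹ ∧ ∀ k, k ≠ i → φ (of k) = of k) ∨
    ∃ i j, i ≠ j ∧ φ (of i) = of i * of j ∧ ∀ k, k ≠ i → φ (of k) = of k }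

theorem mulAut_ext_of {φ ψ : MulAut (FreeGroup α)} (h : ∀ k, φ (of k) = ψ (of k)) : φ = ψ :=
  MulEquiv.toMonoidHom_injective (ext_hom _ _ h)

theorem mk_singleton_eq (a : α × Bool) :
    mk [a] = of a.1 ∨ mk [a] = (of a.1)⁻¹ := by
  obtain ⟨i, _ | _⟩ := a
  · right; rfl
  · left; rfl

variable [DecidableEq α]

/-- The automorphism inverting one generator. -/
def invertGen (i : α) : MulAut (FreeGroup α) :=
  MonoidHom.toMulEquiv (lift (Function.update of i (of i)⁻¹))
    (lift (Function.update of i (of i)⁻¹))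
    (by ext k; by_cases h : k = i <;> simp [h])
    (by ext k; by_cases h : k = i <;> simp [h])

theorem invertGen_of (i k : α) :
    invertGen i (of k) = if k = i then (of i)⁻¹ else of k := by
  simp [invertGen, Function.update_apply]

/-- The automorphism multiplying one generator by another one on the right. -/
def mulGen {i j : α} (hij : i ≠ j) : MulAut (FreeGroup α) :=
  MonoidHom.toMulEquiv (lift (Function.update of i (of i * of j)))
    (lift (Function.update of i (of i * (of j)⁻¹)))
    (by ext k; by_cases h : k = i <;> simp [h, hij.symm])
    (by ext k; by_cases h : k = i <;> simp [h, hij.symm])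

theorem mulGen_of {i j : α} (hij : i ≠ j) (k : α) :
    mulGen hij (of k) = if k = i then of i * of j else of k := by
  simp [mulGen, Function.update_apply]

theorem mulGen_symm_of {i j : α} (hij : i ≠ j) (k : α) :
    (mulGen hij).symm (of k) = if k = i then of i * (of j)⁻¹ else of k := by
  simp [mulGen, Function.update_apply]

theorem invertGen_mem (i : α) : invertGen i ∈ Subgroup.closure (elementaryNielsen α) :=
  Subgroup.subset_closure <| Or.inl ⟨i, by simp [invertGen_of],
    fun k hk ↦ by simp [invertGen_of, hk]⟩

theorem mulGen_mem {i j : α} (hij : i ≠ j) :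
    mulGen hij ∈ Subgroup.closure (elementaryNielsen α) :=
  Subgroup.subset_closure <| Or.inr ⟨i, j, hij, by simp [mulGen_of],
    fun k hk ↦ by simp [mulGen_of, hk]⟩

theorem exists_mem_closure_map_eq_mul {a b : α × Bool} (hab : a.1 ≠ b.1) :
    ∃ ν ∈ Subgroup.closure (elementaryNielsen α),
      ν (of a.1) = mk [a] * mk [b] ∧ ∀ k, k ≠ a.1 → ν (of k) = of k := by
  obtain ⟨σ, hσ, hσa, hσk⟩ : ∃ σ ∈ Subgroup.closure (elementaryNielsen α),
      σ (of a.1) = mk [a] ∧ ∀ k, k ≠ a.1 → σ (of k) = of k := by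
    rcases mk_singleton_eq a with h | h
    · exact ⟨1, one_mem _, by simp [h], by simp⟩
    · exact ⟨invertGen a.1, invertGen_mem _, by simp [h, invertGen_of],
        fun k hk ↦ by simp [invertGen_of, hk]⟩
  obtain ⟨ρ, hρ, hρa, hρk⟩ : ∃ ρ ∈ Subgroup.closure (elementaryNielsen α),
      ρ (of a.1) = of a.1 * mk [b] ∧ ∀ k, k ≠ a.1 → ρ (of k) = of k := by
    rcases mk_singleton_eq b with h | h
    · exact ⟨mulGen hab, mulGen_mem _, by simp [h, mulGen_of],
        fun k hk ↦ by simp [mulGen_of, hk]⟩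
    · exact ⟨(mulGen hab)⁻¹, inv_mem (mulGen_mem _), by simp [h, mulGen_symm_of],
        fun k hk ↦ by simp [mulGen_symm_of, hk]⟩
  have hσb : σ (mk [b]) = mk [b] := by
    rcases mk_singleton_eq b with h | h <;> simp [h, hσk _ hab.symm]
  exact ⟨σ * ρ, mul_mem hσ hρ, by simp [hρa, hσa, hσb],
    fun k hk ↦ by simp [hρk k hk, hσk k hk]⟩

theorem freeGroupCongr_swap_mem {i j : α} (hij : i ≠ j) :
    (freeGroupCongr (Equiv.swap i j) : MulAut (FreeGroup α)) ∈
      Subgroup.closure (elementaryNielsen α) := by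
  have h : (freeGroupCongr (Equiv.swap i j) : MulAut (FreeGroup α)) =
      invertGen i * mulGen hij * invertGen i * mulGen hij.symm * (mulGen hij)⁻¹ * invertGen i := by
    refine mulAut_ext_of fun k ↦ ?_
    by_cases hi : k = i
    · subst hi
      simp [mulGen_of, mulGen_symm_of, invertGen_of, hij, hij.symm]
    · by_cases hj : k = j
      · subst hj
        simp [mulGen_of, mulGen_symm_of, invertGen_of, hij.symm]
      · simp [mulGen_of, mulGen_symm_of, invertGen_of, hi, hj, Equiv.swap_apply_of_ne_of_ne]
  rw [h]
  have h₁ := mulGen_mem hij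
  have h₂ := mulGen_mem hij.symm
  have h₃ := invertGen_mem i
  exact mul_mem (mul_mem (mul_mem (mul_mem (mul_mem h₃ h₁) h₃) h₂) (inv_mem h₁)) h₃

theorem freeGroupCongr_mem [Finite α] (σ : Equiv.Perm α) :
    (freeGroupCongr σ : MulAut (FreeGroup α)) ∈ Subgroup.closure (elementaryNielsen α) := by
  induction σ using Equiv.Perm.swap_induction_on with
  | one =>
    convert one_mem (Subgroup.closure (elementaryNielsen α))
    exact mulAut_ext_of fun k ↦ by simp
  | swap_mul f i j hij ih =>
    convert mul_mem (freeGroupCongr_swap_mem hij) ih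
    exact mulAut_ext_of fun k ↦ by simp

theorem mem_closure_of_map_eq_or_inv (s : Finset α) (φ : MulAut (FreeGroup α))
    (h : ∀ k, φ (of k) = of k ∨ φ (of k) = (of k)⁻¹) (hs : ∀ k ∉ s, φ (of k) = of k) :
    φ ∈ Subgroup.closure (elementaryNielsen α) := by
  induction s using Finset.induction_on generalizing φ with
  | empty =>
    convert one_mem (Subgroup.closure (elementaryNielsen α))
    exact mulAut_ext_of fun k ↦ by simp [hs]
  | insert i s hi ih =>
    have hs' (k) (hki : k ≠ i) (hks : k ∉ s) : φ (of k) = of k := hs k (by simp [hki, hks])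
    rcases h i with hφi | hφi
    · refine ih φ h fun k hk ↦ ?_
      by_cases hki : k = i
      · rw [hki, hφi]
      · exact hs' k hki hk
    · rw [← Subgroup.mul_mem_cancel_right _ (invertGen_mem i)]
      refine ih _ (fun k ↦ ?_) fun k hk ↦ ?_ <;> by_cases hki : k = i
      · simp [hki, invertGen_of, hφi]
      · simpa [hki, invertGen_of] using h k
      · simp [hki, invertGen_of, hφi]
      · simpa [hki, invertGen_of] using hs' k hki hk

theorem mem_closure_of_map_eq_mk_singleton [Finite α] (φ : MulAut (FreeGroup α))
    (h : ∀ k, ∃ a, φ (of k) = mk [a]) : φ ∈ Subgroup.closure (elementaryNielsen α) := by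
  choose f hf using h
  have hf' (k) : φ (of k) = of (f k).1 ∨ φ (of k) = (of (f k).1)⁻¹ :=
    hf k ▸ mk_singleton_eq (f k)
  have hinj : Function.Injective fun k ↦ (f k).1 := by
    intro k l hkl
    have : φ (of k) = φ (of l) ∨ φ (of k) = (φ (of l))⁻¹ := by
      simp only at hkl
      rcases hf' k with h₁ | h₁ <;> rcases hf' l with h₂ | h₂ <;> simp [h₁, h₂, hkl]
    rw [← _root_.map_inv φ, φ.injective.eq_iff, φ.injective.eq_iff] at this
    rcases this with h | h
    · exact of_injective h
    · have := congrArg toWord h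
      simp [toWord_inv, invRev] at this
  set σ := Equiv.ofBijective _ (Finite.injective_iff_bijective.1 hinj)
  have := Fintype.ofFinite α
  rw [← Subgroup.mul_mem_cancel_left _ (freeGroupCongr_mem σ⁻¹)]
  refine mem_closure_of_map_eq_or_inv Finset.univ _ (fun k ↦ ?_) (by simp)
  have hσ : σ.symm (f k).1 = k := σ.symm_apply_apply k
  rcases hf' k with h | h <;> simp [h, hσ]

theorem closure_elementaryNielsen [Fintype α] : Subgroup.closure (elementaryNielsen α) = ⊤ := by
  refine (Subgroup.eq_top_iff' _).2 fun φ ↦ ?_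
  induction hn : ∑ k, weight (φ (of k)) using Nat.strong_induction_on generalizing φ with
  | _ n ih =>
    by_cases hmin : ∀ a b : α × Bool, a.1 ≠ b.1 →
        weight (φ (mk [a])) ≤ weight (φ (mk [a] * mk [b]))
    · rw [← inv_mem_iff]
      refine mem_closure_of_map_eq_mk_singleton _ fun k ↦ exists_mk_singleton_of_norm_eq_one ?_
      have hle := norm_le_norm_map (φ := φ.toMonoidHom) φ.injective hmin (φ⁻¹ (of k))
      have heq : φ.toMonoidHom (φ⁻¹ (of k)) = of k := φ.apply_symm_apply _
      rw [heq, norm_of] at hle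
      have hne : norm (φ⁻¹ (of k)) ≠ 0 := by simp
      omega
    · push Not at hmin
      obtain ⟨a, b, hab, hlt⟩ := hmin
      obtain ⟨ν, hν, hνa, hνk⟩ := exists_mem_closure_map_eq_mul hab
      rw [← Subgroup.mul_mem_cancel_right _ hν]
      refine ih _ ?_ (φ * ν) rfl
      rw [← hn]
      have hlt' : weight ((φ * ν) (of a.1)) < weight (φ (of a.1)) := by
        rw [MulAut.mul_apply, hνa]
        refine hlt.trans_eq ?_
        rcases mk_singleton_eq a with h | h <;> simp [h, weight_inv]
      refine Finset.sum_lt_sum (fun k _ ↦ ?_) ⟨a.1, Finset.mem_univ _, hlt'⟩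
      by_cases hk : k = a.1
      · exact hk ▸ hlt'.le
      · rw [MulAut.mul_apply, hνk k hk]

end Nielsen

end FreeGroup

/-- The automorphism group of the free group of finite rank `q` is generated by
the elementary Nielsen transformation automorphisms: for each `i` the
automorphism `xᵢ ↦ xᵢ⁻¹` fixing `x_k` for `k ≠ i` (T1), and for each `i ≠ j`
the automorphism `xᵢ ↦ xᵢ xⱼ` fixing `x_k` for `k ≠ i` (T2). -/
theorem mulAut_freeGroup_generated_by_nielsen (q : ℕ) :
    Subgroup.closure
      { φ : MulAut (FreeGroup (Fin q)) |
        (∃ i : Fin q, φ (FreeGroup.of i) = (FreeGroup.of i)⁻¹ ∧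
          ∀ k : Fin q, k ≠ i → φ (FreeGroup.of k) = FreeGroup.of k) ∨
        (∃ i j : Fin q, i ≠ j ∧
          φ (FreeGroup.of i) = FreeGroup.of i * FreeGroup.of j ∧
          ∀ k : Fin q, k ≠ i → φ (FreeGroup.of k) = FreeGroup.of k) } = ⊤ := by
  exact FreeGroup.closure_elementaryNielsen
end

section
/- Fix q ≥ 3 and let F_q be the free group of rank q. Let P(q,k) denote the number of primitive elements of F_q of free length k. Then there exist constants c₁ > 0 and c₂ > 0 such that for all k ≥ 1: c₁·(2q−3)^k ≤ P(q,k) ≤ c₂·(2q−2)^k. -/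
/-- An element `g` of a group `G` is *primitive* if there is a free basis of `G`
containing `g`, i.e. a subset `s ∋ g` which generates `G` and freely generates:
the induced homomorphism from the free group on `s` is injective. -/
def IsPrimitive {G : Type*} [Group G] (g : G) : Prop :=
  ∃ s : Set G, g ∈ s ∧ Subgroup.closure s = ⊤ ∧
    Function.Injective ⇑(FreeGroup.lift (Subtype.val : s → G))

section Primitive

variable {G H : Type*} [Group G] [Group H]

theorem IsPrimitive.of_mulEquiv {ι : Type*} (e : FreeGroup ι ≃* G) (i : ι) :
    IsPrimitive (e (FreeGroup.of i)) := by
  have hinj : Function.Injective fun i => e (FreeGroup.of i) :=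
    e.injective.comp FreeGroup.of_injective
  refine ⟨Set.range fun i => e (FreeGroup.of i), ⟨i, rfl⟩, ?_, ?_⟩
  · have h := congrArg (Subgroup.map e.toMonoidHom) (FreeGroup.closure_range_of ι)
    rw [MonoidHom.map_closure, ← Set.range_comp, Subgroup.map_top_of_surjective _ e.surjective] at h
    exact h
  · have h : (FreeGroup.lift (Subtype.val : (Set.range fun i => e (FreeGroup.of i)) → G)) =
        e.toMonoidHom.comp (FreeGroup.freeGroupCongr (Equiv.ofInjective _ hinj)).symm.toMonoidHom := by
      ext ⟨_, j, rfl⟩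
      have : (Equiv.ofInjective _ hinj).symm ⟨e (FreeGroup.of j), j, rfl⟩ = j :=
        Equiv.ofInjective_symm_apply hinj j
      simp [this]
    rw [h]
    exact e.injective.comp (MulEquiv.injective _)

theorem IsPrimitive.exists_mulEquiv {g : G} (hg : IsPrimitive g) :
    ∃ (s : Set G) (e : FreeGroup s ≃* G) (i : s), (∀ j : s, e (FreeGroup.of j) = j) ∧ i = g := by
  obtain ⟨s, hs, hcl, hinj⟩ := hg
  have hsurj : Function.Surjective (FreeGroup.lift (Subtype.val : s → G)) := by
    rw [← MonoidHom.range_eq_top, FreeGroup.range_lift_eq_closure, Subtype.range_val, hcl]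
  exact ⟨s, MulEquiv.ofBijective _ ⟨hinj, hsurj⟩, ⟨g, hs⟩, fun _ => FreeGroup.lift_apply_of, rfl⟩

theorem IsPrimitive.map {g : G} (hg : IsPrimitive g) (e : G ≃* H) : IsPrimitive (e g) := by
  obtain ⟨s, f, i, hf, rfl⟩ := hg.exists_mulEquiv
  rw [← hf i]
  exact .of_mulEquiv (f.trans e) i

theorem IsPrimitive.conj {g : G} (hg : IsPrimitive g) (h : G) : IsPrimitive (h * g * h⁻¹) :=
  hg.map (MulAut.conj h)

theorem IsPrimitive.exists_generating_finset {X : Type*} [Fintype X] {g : FreeGroup X}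
    (hg : IsPrimitive g) :
    ∃ s : Finset (FreeGroup X), g ∈ s ∧ s.card = Fintype.card X ∧
      Subgroup.closure (s : Set (FreeGroup X)) = ⊤ := by
  obtain ⟨s, e, i, he, rfl⟩ := hg.exists_mulEquiv
  have E : s ≃ X := Equiv.ofFreeGroupEquiv e
  have : Fintype s := Fintype.ofEquiv X E.symm
  refine ⟨s.toFinset, by simp, by rw [Set.toFinset_card, Fintype.card_congr E], ?_⟩
  have h := FreeGroup.range_lift_eq_closure (f := (Subtype.val : s → FreeGroup X))
  rw [Subtype.range_val] at h
  rw [Set.coe_toFinset, ← h, MonoidHom.range_eq_top]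
  have : FreeGroup.lift (Subtype.val : s → FreeGroup X) = e.toMonoidHom := by
    ext j
    simp [he]
  rw [this]
  exact e.surjective

end Primitive

/-- The formal inverse of a letter `x` or `x⁻¹`. -/
def letterInv {X : Type*} (l : X × Bool) : X × Bool := (l.1, !l.2)

section LetterInv

variable {X : Type*}

@[simp]
theorem letterInv_letterInv (l : X × Bool) : letterInv (letterInv l) = l := by
  simp [letterInv]

theorem letterInv_ne_self (l : X × Bool) : letterInv l ≠ l := by
  obtain ⟨x, b⟩ := l
  cases b <;> simp [letterInv]

theorem letterInv_eq_iff {l m : X × Bool} : letterInv l = m ↔ l = letterInv m :=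
  ⟨fun h => by rw [← h, letterInv_letterInv], fun h => by rw [h, letterInv_letterInv]⟩

theorem ne_letterInv_iff {l m : X × Bool} : m ≠ letterInv l ↔ (l.1 = m.1 → l.2 = m.2) := by
  obtain ⟨x, b⟩ := l
  obtain ⟨y, c⟩ := m
  cases b <;> cases c <;> simp [letterInv, eq_comm]

end LetterInv

/-! ### Graphs with edges labeled by generators -/

section LabeledGraph

variable {α β X : Type*}

/-- The labeled edge traversed when moving from `u` to `v` reading the letter `l`. -/
def letterEdge (u : α) (l : X × Bool) (v : α) : α × X × α :=
  if l.2 then (u, l.1, v) else (v, l.1, u)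

/-- The word `L` labels an edge path from `u` to `v` in the labeled graph with edge set `E`. -/
def IsLabeledPath (E : Finset (α × X × α)) : α → List (X × Bool) → α → Prop
  | u, [], v => u = v
  | u, l :: L, v => ∃ p, letterEdge u l p ∈ E ∧ IsLabeledPath E p L v

/-- The letters labeling the directions at a vertex of a labeled graph. -/
def directions (E : Finset (α × X × α)) (v : α) : Set (X × Bool) :=
  {l | ∃ u, letterEdge v l u ∈ E}

theorem letterEdge_letterInv (u v : α) (l : X × Bool) :
    letterEdge v (letterInv l) u = letterEdge u l v := by
  obtain ⟨x, b⟩ := l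
  cases b <;> simp [letterEdge, letterInv]

@[simp]
theorem letterEdge_label (u v : α) (l : X × Bool) : (letterEdge u l v).2.1 = l.1 := by
  unfold letterEdge
  split <;> rfl

theorem letterEdge_right_injective {u v v' : α} {l : X × Bool}
    (h : letterEdge u l v = letterEdge u l v') : v = v' := by
  obtain ⟨x, b⟩ := l
  cases b <;> simpa [letterEdge] using h

theorem letterEdge_left_injective {u u' v v' : α} {l : X × Bool}
    (h : letterEdge u l v = letterEdge u' l v') : u = u' := by
  obtain ⟨x, b⟩ := l
  cases b <;> simp [letterEdge] at h <;> tauto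

theorem map_letterEdge (f : α → β) (u v : α) (l : X × Bool) :
    Prod.map f (Prod.map id f) (letterEdge u l v) = letterEdge (f u) l (f v) := by
  unfold letterEdge
  split <;> rfl

theorem IsLabeledPath.mono {E E' : Finset (α × X × α)} (h : E ⊆ E') {L : List (X × Bool)} {u v : α}
    (hp : IsLabeledPath E u L v) : IsLabeledPath E' u L v := by
  induction L generalizing u with
  | nil => exact hp
  | cons l L ih =>
    obtain ⟨p, h1, h2⟩ := hp
    exact ⟨p, h h1, ih h2⟩

theorem IsLabeledPath.map [DecidableEq β] [DecidableEq X] {E : Finset (α × X × α)} (f : α → β)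
    {L : List (X × Bool)} {u v : α} (h : IsLabeledPath E u L v) :
    IsLabeledPath (E.image (Prod.map f (Prod.map id f))) (f u) L (f v) := by
  induction L generalizing u with
  | nil => exact congrArg f h
  | cons l L ih =>
    obtain ⟨p, h1, h2⟩ := h
    exact ⟨f p, map_letterEdge f u p l ▸ Finset.mem_image_of_mem _ h1, ih h2⟩

theorem directions_mono {E E' : Finset (α × X × α)} (h : E ⊆ E') (v : α) :
    directions E v ⊆ directions E' v := fun _ ⟨u, hu⟩ => ⟨u, h hu⟩

theorem directions_map [DecidableEq β] [DecidableEq X] {E : Finset (α × X × α)} (f : α → β)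
    (v : α) : directions E v ⊆ directions (E.image (Prod.map f (Prod.map id f))) (f v) :=
  fun l ⟨u, hu⟩ => ⟨f u, map_letterEdge f v u l ▸ Finset.mem_image_of_mem _ hu⟩

theorem exists_attach_path [Infinite α] [DecidableEq α] [DecidableEq X]
    {L : List (X × Bool)} (hL : FreeGroup.IsReduced L) (hne : L ≠ []) (V : Finset α)
    (E : Finset (α × X × α)) (hE : ∀ e ∈ E, e.1 ∈ V ∧ e.2.2 ∈ V) {u v : α} (hu : u ∈ V)
    (hv : v ∈ V) :
    ∃ (V' : Finset α) (E' : Finset (α × X × α)), V ⊆ V' ∧ E ⊆ E' ∧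
      (∀ e ∈ E', e.1 ∈ V' ∧ e.2.2 ∈ V') ∧ IsLabeledPath E' u L v ∧
      E'.card ≤ E.card + L.length ∧ V'.card + 1 = V.card + L.length ∧
      ∀ p ∈ V', p ∈ V ∨ ((directions E' p).Nontrivial ∧ ∃ M, IsLabeledPath E' u M p) := by
  have hmem : ∀ {V : Finset α} {u v : α} {l : X × Bool}, u ∈ V → v ∈ V →
      (letterEdge u l v).1 ∈ V ∧ (letterEdge u l v).2.2 ∈ V := by
    intro V u v l hu hv
    unfold letterEdge
    split <;> simp [hu, hv]
  induction L generalizing V E u with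
  | nil => exact absurd rfl hne
  | cons x L ih =>
    cases L with
    | nil =>
      refine ⟨V, insert (letterEdge u x v) E, subset_rfl, Finset.subset_insert _ _, ?_,
        ⟨v, Finset.mem_insert_self _ _, rfl⟩, Finset.card_insert_le _ _, rfl,
        fun p hp => .inl hp⟩
      intro e he
      rcases Finset.mem_insert.1 he with rfl | he
      · exact hmem hu hv
      · exact hE e he
    | cons y L =>
      obtain ⟨p, hp⟩ := Infinite.exists_notMem_finset V
      have hxy := List.isChain_cons_cons.1 hL
      obtain ⟨V', E', hV', hE', hend, hpath, hcE, hcV, hgood⟩ := ih hxy.2 (by simp) (insert p V)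
        (insert (letterEdge u x p) E) (by
          intro e he
          rcases Finset.mem_insert.1 he with rfl | he
          · exact hmem (Finset.mem_insert_of_mem hu) (Finset.mem_insert_self _ _)
          · exact (hE e he).imp Finset.mem_insert_of_mem Finset.mem_insert_of_mem)
        (Finset.mem_insert_self p V) (Finset.mem_insert_of_mem hv)
      have hx : letterEdge u x p ∈ E' := hE' (Finset.mem_insert_self _ _)
      refine ⟨V', E', (Finset.subset_insert _ _).trans hV', (Finset.subset_insert _ _).trans hE',
        hend, ⟨p, hx, hpath⟩, ?_, ?_, ?_⟩
      · have := Finset.card_insert_le (letterEdge u x p) E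
        simp only [List.length_cons] at hcE ⊢
        omega
      · rw [Finset.card_insert_of_notMem hp] at hcV
        simp only [List.length_cons] at hcV ⊢
        omega
      · intro r hr
        rcases hgood r hr with h | ⟨h, M, hM⟩
        · rcases Finset.mem_insert.1 h with rfl | h
          · refine .inr ⟨⟨y, ?_, letterInv x, ⟨u, ?_⟩, ?_⟩, [x], r, hx, rfl⟩
            · obtain ⟨z, hz, -⟩ := hpath
              exact ⟨z, hz⟩
            · rwa [letterEdge_letterInv]
            · exact ne_letterInv_iff.2 hxy.1
          · exact .inl h
        · exact .inr ⟨h, x :: M, p, hx, hM⟩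

/-- A connected labeled graph of Euler characteristic at least `1 - |X|`, all of whose vertices
have two distinct directions, whose closed paths at `b` represent all of `FreeGroup X`, and in
which `w` labels a closed path at `b`. -/
structure IsMarkedGraph [Fintype X] (w : List (X × Bool)) (b : α) (V : Finset α)
    (E : Finset (α × X × α)) : Prop where
  endpoints : ∀ e ∈ E, e.1 ∈ V ∧ e.2.2 ∈ V
  base_mem : b ∈ V
  card_le : E.card + 1 ≤ V.card + Fintype.card X
  nontrivial : ∀ v ∈ V, (directions E v).Nontrivial
  connected : ∀ v ∈ V, ∃ L, IsLabeledPath E b L v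
  generates : Subgroup.closure {g | ∃ L, IsLabeledPath E b L b ∧ FreeGroup.mk L = g} = ⊤
  closed : IsLabeledPath E b w b

theorem exists_wedge [Infinite α] [DecidableEq α] [DecidableEq X] (b : α)
    (s : Finset (FreeGroup X)) :
    ∃ (V : Finset α) (E : Finset (α × X × α)), (∀ e ∈ E, e.1 ∈ V ∧ e.2.2 ∈ V) ∧ b ∈ V ∧
      E.card + 1 ≤ V.card + s.card ∧ (∀ v ∈ V, v = b ∨ (directions E v).Nontrivial) ∧
      (∀ v ∈ V, ∃ L, IsLabeledPath E b L v) ∧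
      ∀ g ∈ s, IsLabeledPath E b g.toWord b ∧ g.norm ≤ V.card := by
  induction s using Finset.induction_on with
  | empty =>
    refine ⟨{b}, ∅, by simp, by simp, by simp, by simp, ?_, by simp⟩
    intro v hv
    exact ⟨[], (Finset.mem_singleton.1 hv).symm⟩
  | insert g s hg ih =>
    obtain ⟨V, E, h1, h2, h3, h4, h5, h6⟩ := ih
    rw [Finset.card_insert_of_notMem hg]
    by_cases hne : g.toWord = []
    · refine ⟨V, E, h1, h2, by omega, h4, h5, ?_⟩
      intro g' hg'
      rcases Finset.mem_insert.1 hg' with rfl | hg'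
      · simp [FreeGroup.norm, hne, IsLabeledPath]
      · exact h6 g' hg'
    · obtain ⟨V', E', hV', hE', hend, hpath, hcE, hcV, hgood⟩ :=
        exists_attach_path FreeGroup.isReduced_toWord hne V E h1 h2 h2
      have hpos : 0 < g.toWord.length := List.length_pos_iff.2 hne
      have hVpos : 0 < V.card := Finset.card_pos.2 ⟨b, h2⟩
      refine ⟨V', E', hend, hV' h2, by omega, ?_, ?_, ?_⟩
      · intro v hv
        rcases hgood v hv with h | h
        · exact (h4 v h).imp_right fun h => h.mono (directions_mono hE' v)
        · exact .inr h.1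
      · intro v hv
        rcases hgood v hv with h | h
        · exact (h5 v h).imp fun L hL => hL.mono hE'
        · exact h.2
      · intro g' hg'
        rcases Finset.mem_insert.1 hg' with rfl | hg'
        · exact ⟨hpath, by unfold FreeGroup.norm; omega⟩
        · exact ⟨(h6 g' hg').1.mono hE', (h6 g' hg').2.trans (Finset.card_le_card hV')⟩

theorem IsLabeledPath.exists_letterEdge_getLast {E : Finset (α × X × α)} {L : List (X × Bool)}
    {u v : α} (h : IsLabeledPath E u L v) {l : X × Bool} (hl : l ∈ L.getLast?) :
    ∃ p, letterEdge p l v ∈ E := by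
  induction L generalizing u with
  | nil => simp at hl
  | cons x L ih =>
    obtain ⟨p, hp, hL⟩ := h
    cases L with
    | nil =>
      obtain rfl : p = v := hL
      obtain rfl : x = l := by simpa using hl
      exact ⟨u, hp⟩
    | cons y L => exact ih hL (by simpa using hl)

theorem IsPrimitive.exists_isMarkedGraph [Fintype X] [DecidableEq X] {g : FreeGroup X}
    (hg : IsPrimitive g) (hcyc : FreeGroup.IsCyclicallyReduced g.toWord) (hlen : 2 ≤ g.norm) :
    ∃ (b : ℕ) (V : Finset ℕ) (E : Finset (ℕ × X × ℕ)),
      IsMarkedGraph g.toWord b V E ∧ 2 ≤ V.card := by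
  obtain ⟨s, hgs, hcard, hcl⟩ := hg.exists_generating_finset
  obtain ⟨V, E, h1, h2, h3, h4, h5, h6⟩ := exists_wedge 0 s
  refine ⟨0, V, E, ⟨h1, h2, hcard ▸ h3, ?_, h5, ?_, (h6 g hgs).1⟩, hlen.trans (h6 g hgs).2⟩
  · intro v hv
    rcases h4 v hv with rfl | h
    · have hp := (h6 g hgs).1
      have hne : g.toWord ≠ [] := by
        intro h
        simp [FreeGroup.norm, h] at hlen
      obtain ⟨p, hp'⟩ := hp.exists_letterEdge_getLast (List.getLast?_eq_some_getLast hne)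
      have hhd : ∃ l ∈ g.toWord.head?, ∃ p, letterEdge 0 l p ∈ E := by
        cases hw : g.toWord with
        | nil => exact absurd hw hne
        | cons l L =>
          rw [hw] at hp
          obtain ⟨p, hp, -⟩ := hp
          exact ⟨l, rfl, p, hp⟩
      obtain ⟨l, hl, hl'⟩ := hhd
      refine ⟨l, hl', letterInv (g.toWord.getLast hne), ⟨p, ?_⟩, ?_⟩
      · rwa [letterEdge_letterInv]
      · exact ne_letterInv_iff.2 (hcyc.2 _ (List.getLast?_eq_some_getLast hne) l hl)
    · exact h
  · rw [eq_top_iff, ← hcl]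
    exact Subgroup.closure_mono fun g' hg' => ⟨g'.toWord, (h6 g' hg').1, FreeGroup.mk_toWord⟩


theorem IsMarkedGraph.letterEdge_right_mem [Fintype X] {w : List (X × Bool)} {b : α}
    {V : Finset α} {E : Finset (α × X × α)} (h : IsMarkedGraph w b V E)
    {u v : α} {l : X × Bool} (he : letterEdge u l v ∈ E) : v ∈ V := by
  unfold letterEdge at he
  split at he
  exacts [(h.endpoints _ he).2, (h.endpoints _ he).1]

/-- In a labeled graph where each letter labels at most one direction at each vertex, any vertex
reached from `b` is `b` itself as soon as the closed paths at `b` generate the free group. -/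
theorem IsMarkedGraph.card_le_one_of_deterministic [Fintype X] [DecidableEq α] {w : List (X × Bool)}
    {b : α} {V : Finset α} {E : Finset (α × X × α)} (h : IsMarkedGraph w b V E)
    (hdet : ∀ v l u₁ u₂, letterEdge v l u₁ ∈ E → letterEdge v l u₂ ∈ E → u₁ = u₂) :
    V.card ≤ 1 := by
  have hperm : ∀ x : X, ∃ σ : Equiv.Perm V, ∀ u v (he : (u, x, v) ∈ E),
      σ ⟨v, (h.endpoints _ he).2⟩ = ⟨u, (h.endpoints _ he).1⟩ := by
    classical
    intro x
    set t : Finset V := Finset.univ.filter fun v => ∃ u, (u, x, v.1) ∈ E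
    have hf : ∀ v : V, ∃ u : V, v ∈ t → (u.1, x, v.1) ∈ E := by
      intro v
      by_cases hv : v ∈ t
      · obtain ⟨u, hu⟩ := (Finset.mem_filter.1 hv).2
        exact ⟨⟨u, (h.endpoints _ hu).1⟩, fun _ => hu⟩
      · exact ⟨v, fun h => absurd h hv⟩
    choose f hf using hf
    obtain ⟨g, hg⟩ := Finset.exists_equiv_extend_of_card_eq (t := (Finset.univ : Finset V))
      (by simp) (s := t) (f := f) (Finset.subset_univ _) (by
        intro v hv v' hv' hvv'
        have h1 := hf v hv
        have h2 := hf v' hv'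
        rw [← hvv'] at h2
        exact Subtype.ext (hdet (f v) (x, true) _ _ h1 h2))
    refine ⟨g.trans (Equiv.subtypeUnivEquiv Finset.mem_univ), fun u v he => ?_⟩
    have hv : (⟨v, (h.endpoints _ he).2⟩ : V) ∈ t :=
      Finset.mem_filter.2 ⟨Finset.mem_univ _, u, he⟩
    have h1 := hf _ hv
    have h2 : (f ⟨v, (h.endpoints _ he).2⟩).1 = u := hdet v (x, false) _ _ h1 he
    exact (hg _ hv).trans (Subtype.ext h2)
  choose σ hσ using hperm
  have hstep : ∀ u (l : X × Bool) v (hu : u ∈ V) (hv : v ∈ V), letterEdge u l v ∈ E →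
      FreeGroup.lift σ (FreeGroup.mk [l]) ⟨v, hv⟩ = ⟨u, hu⟩ := by
    rintro u ⟨x, c⟩ v hu hv he
    cases c
    · have := hσ x v u he
      simp [← this]
    · simpa using hσ x u v he
  have hpath : ∀ (L : List (X × Bool)) (u v : α) (hu : u ∈ V) (hv : v ∈ V),
      IsLabeledPath E u L v → FreeGroup.lift σ (FreeGroup.mk L) ⟨v, hv⟩ = ⟨u, hu⟩ := by
    intro L
    induction L with
    | nil =>
      rintro u v hu hv rfl
      rw [← FreeGroup.one_eq_mk, map_one]
      rfl
    | cons l L ih =>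
      rintro u v hu hv ⟨p, hp, hL⟩
      have hpV := h.letterEdge_right_mem hp
      rw [← List.singleton_append, ← FreeGroup.mul_mk, map_mul, Equiv.Perm.mul_apply,
        ih p v hpV hv hL, hstep u l p hu hpV hp]
  have hfix : ∀ g : FreeGroup X, FreeGroup.lift σ g ⟨b, h.base_mem⟩ = ⟨b, h.base_mem⟩ := by
    intro g
    have hle : Subgroup.closure {g | ∃ L, IsLabeledPath E b L b ∧ FreeGroup.mk L = g} ≤
        (MulAction.stabilizer (Equiv.Perm V) (⟨b, h.base_mem⟩ : V)).comap (FreeGroup.lift σ) := by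
      rw [Subgroup.closure_le]
      rintro _ ⟨L, hL, rfl⟩
      exact hpath L b b h.base_mem h.base_mem hL
    rw [h.generates] at hle
    exact hle (Subgroup.mem_top g)
  have huniq : ∀ v ∈ V, v = b := by
    intro v hv
    obtain ⟨L, hL⟩ := h.connected v hv
    have := (hpath L b v h.base_mem hv hL).trans (hfix (FreeGroup.mk L)).symm
    exact congrArg Subtype.val ((FreeGroup.lift σ (FreeGroup.mk L)).injective this)
  exact Finset.card_le_one.2 fun u hu v hv => (huniq u hu).trans (huniq v hv).symm

theorem IsMarkedGraph.exists_foldable [Fintype X] [DecidableEq α] {w : List (X × Bool)}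
    {b : α} {V : Finset α} {E : Finset (α × X × α)} (h : IsMarkedGraph w b V E)
    (hV : 2 ≤ V.card) :
    ∃ v l u₁ u₂, letterEdge v l u₁ ∈ E ∧ letterEdge v l u₂ ∈ E ∧ u₁ ≠ u₂ := by
  by_contra! hcon
  have := h.card_le_one_of_deterministic hcon
  omega

theorem IsMarkedGraph.fold [Fintype X] [DecidableEq X] [DecidableEq α] {w : List (X × Bool)}
    {b : α} {V : Finset α} {E : Finset (α × X × α)} (h : IsMarkedGraph w b V E)
    {v u₁ u₂ : α} {l : X × Bool} (h₁ : letterEdge v l u₁ ∈ E) (h₂ : letterEdge v l u₂ ∈ E)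
    (hne : u₁ ≠ u₂) :
    ∃ (b' : α) (V' : Finset α) (E' : Finset (α × X × α)),
      IsMarkedGraph w b' V' E' ∧ V'.card + 1 = V.card := by
  set f : α → α := fun x => if x = u₂ then u₁ else x with hf
  set F : α × X × α → α × X × α := Prod.map f (Prod.map id f) with hF
  have hu₁ := h.letterEdge_right_mem h₁
  have hu₂ := h.letterEdge_right_mem h₂
  have hV : V.image f = V.erase u₂ := by
    ext x
    simp only [Finset.mem_image, Finset.mem_erase, hf]
    constructor
    · rintro ⟨y, hy, rfl⟩
      split
      exacts [⟨hne, hu₁⟩, ⟨by assumption, hy⟩]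
    · rintro ⟨hx, hxV⟩
      exact ⟨x, hxV, if_neg hx⟩
  have hVcard : (V.image f).card + 1 = V.card := by
    rw [hV, Finset.card_erase_add_one hu₂]
  have hcoll : F (letterEdge v l u₁) = F (letterEdge v l u₂) := by
    rw [hF, map_letterEdge, map_letterEdge]
    simp [hf]
  have hEcard : (E.image F).card + 1 ≤ E.card := by
    have hE : E.image F = (E.erase (letterEdge v l u₂)).image F := by
      refine subset_antisymm ?_ (Finset.image_subset_image (Finset.erase_subset _ _))
      intro e he
      obtain ⟨e, he', rfl⟩ := Finset.mem_image.1 he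
      by_cases hee : e = letterEdge v l u₂
      · rw [hee, ← hcoll]
        exact Finset.mem_image_of_mem _ (Finset.mem_erase.2
          ⟨fun hh => hne (letterEdge_right_injective hh), h₁⟩)
      · exact Finset.mem_image_of_mem _ (Finset.mem_erase.2 ⟨hee, he'⟩)
    rw [hE, ← Finset.card_erase_add_one h₂]
    exact Nat.succ_le_succ Finset.card_image_le
  refine ⟨f b, V.image f, E.image F, ⟨?_, ?_, ?_, ?_, ?_, ?_, h.closed.map f⟩, hVcard⟩
  · intro e he
    obtain ⟨e, he', rfl⟩ := Finset.mem_image.1 he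
    exact ⟨Finset.mem_image_of_mem f (h.endpoints e he').1,
      Finset.mem_image_of_mem f (h.endpoints e he').2⟩
  · exact Finset.mem_image_of_mem f h.base_mem
  · have := h.card_le
    omega
  · intro p hp
    obtain ⟨p, hp', rfl⟩ := Finset.mem_image.1 hp
    exact (h.nontrivial p hp').mono (directions_map f p)
  · intro p hp
    obtain ⟨p, hp', rfl⟩ := Finset.mem_image.1 hp
    exact (h.connected p hp').imp fun L hL => hL.map f
  · rw [eq_top_iff, ← h.generates]
    apply Subgroup.closure_mono
    rintro _ ⟨L, hL, rfl⟩
    exact ⟨L, hL.map f, rfl⟩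

theorem IsMarkedGraph.exists_card_eq_two [Fintype X] [DecidableEq X] [DecidableEq α]
    {w : List (X × Bool)} {b : α} {V : Finset α} {E : Finset (α × X × α)}
    (h : IsMarkedGraph w b V E) (hV : 2 ≤ V.card) :
    ∃ (b' : α) (V' : Finset α) (E' : Finset (α × X × α)),
      IsMarkedGraph w b' V' E' ∧ V'.card = 2 := by
  obtain ⟨n, hn⟩ := Nat.exists_eq_add_of_le hV
  induction n generalizing b V E with
  | zero => exact ⟨b, V, E, h, hn⟩
  | succ n ih =>
    obtain ⟨v, l, u₁, u₂, h₁, h₂, hne⟩ := h.exists_foldable hV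
    obtain ⟨b', V', E', h', hcard⟩ := h.fold h₁ h₂ hne
    exact ih h' (by omega) (by omega)

theorem IsMarkedGraph.exists_label_eq [Fintype X] [DecidableEq X] {w : List (X × Bool)}
    {b : α} {V : Finset α} {E : Finset (α × X × α)} (h : IsMarkedGraph w b V E) (x : X) :
    ∃ e ∈ E, e.2.1 = x := by
  by_contra! hcon
  set φ : FreeGroup X →* Multiplicative ℤ :=
    FreeGroup.lift fun y => if y = x then Multiplicative.ofAdd 1 else 1 with hφ
  have hpath : ∀ (L : List (X × Bool)) (u v : α), IsLabeledPath E u L v →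
      φ (FreeGroup.mk L) = 1 := by
    intro L
    induction L with
    | nil => intro u v _; rw [← FreeGroup.one_eq_mk, map_one]
    | cons l L ih =>
      rintro u v ⟨p, hp, hL⟩
      have hl : l.1 ≠ x := by
        rw [← letterEdge_label u p l]
        exact hcon _ hp
      rw [← List.singleton_append, ← FreeGroup.mul_mk, map_mul, ih p v hL]
      simp [hφ, hl]
  have hle : Subgroup.closure {g | ∃ L, IsLabeledPath E b L b ∧ FreeGroup.mk L = g} ≤ φ.ker := by
    rw [Subgroup.closure_le]
    rintro _ ⟨L, hL, rfl⟩
    exact hpath L b b hL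
  rw [h.generates] at hle
  have : φ (FreeGroup.of x) = 1 := hle (Subgroup.mem_top _)
  simp [hφ] at this

/-- In a marked graph with two vertices, only one letter labels directions at both vertices. -/
theorem IsMarkedGraph.exists_inter_directions_subset [Fintype X] [DecidableEq X] [DecidableEq α]
    {w : List (X × Bool)} {b : α} {V : Finset α} {E : Finset (α × X × α)}
    (h : IsMarkedGraph w b V E) (hV : V.card = 2) :
    ∃ c : X × Bool, ∀ p q, p ≠ q → directions E p ∩ directions E q ⊆ {c} := by
  obtain ⟨v, l, u₁, u₂, h₁, h₂, hne⟩ := h.exists_foldable hV.ge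
  refine ⟨letterInv l, ?_⟩
  rintro p q hpq d ⟨⟨p', hp⟩, ⟨q', hq⟩⟩
  have hdne : letterEdge p d p' ≠ letterEdge q d q' := fun hh => hpq (letterEdge_left_injective hh)
  have hlne : letterEdge v l u₁ ≠ letterEdge v l u₂ := fun hh => hne (letterEdge_right_injective hh)
  have hcard := h.card_le
  have key : ∀ e ∈ E, ∀ e' ∈ E, e ≠ e' → e.2.1 = e'.2.1 →
      e = letterEdge p d p' ∨ e = letterEdge q d q' := by
    intro e he e' he' hee hlab
    by_contra! hcon
    have hinj : Set.InjOn (fun e : α × X × α => e.2.1) (E.erase e : Finset (α × X × α)) := by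
      refine Finset.injOn_of_surjOn_of_card_le _ (t := (Finset.univ : Finset X))
        (fun _ _ => by simp) ?_ ?_
      · intro x _
        obtain ⟨e₀, he₀, rfl⟩ := h.exists_label_eq x
        by_cases h0 : e₀ = e
        · exact ⟨e', by simp [he', hee.symm], by simp [h0, hlab]⟩
        · exact ⟨e₀, by simp [he₀, h0], rfl⟩
      · rw [Finset.card_erase_of_mem he, Finset.card_univ]
        omega
    exact hdne (hinj (by simp [hp, hcon.1.symm]) (by simp [hq, hcon.2.symm]) (by simp))
  have k₁ := key _ h₁ _ h₂ hlne (by simp)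
  have k₂ := key _ h₂ _ h₁ hlne.symm (by simp)
  have hdl : d.1 = l.1 := by
    rcases k₁ with k | k <;> simpa using (congrArg (fun e => e.2.1) k).symm
  by_contra hd
  have hdl' : d = l := by
    exact Prod.ext hdl (ne_letterInv_iff.1 hd hdl.symm).symm
  subst hdl'
  rcases k₁ with k₁ | k₁ <;> rcases k₂ with k₂ | k₂
  · exact hlne (k₁.trans k₂.symm)
  · exact hpq ((letterEdge_left_injective k₁).symm.trans (letterEdge_left_injective k₂))
  · exact hpq ((letterEdge_left_injective k₂).symm.trans (letterEdge_left_injective k₁))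
  · exact hlne (k₁.trans k₂.symm)

end LabeledGraph

section CutVertex

variable {X : Type*}

/-- `IsCutTransition c A x y` says that `y` may follow `x` in a reduced word whose Whitehead graph
has the cut vertex `c`, separating the letters in `A` from the remaining ones. -/
def IsCutTransition (c : X × Bool) (A : Finset (X × Bool)) (x y : X × Bool) : Prop :=
  y ≠ letterInv x ∧ (letterInv x = c ∨ y = c ∨ (letterInv x ∈ A ↔ y ∈ A))

/-- Whitehead's cut vertex lemma. -/
theorem IsPrimitive.exists_isChain_isCutTransition [Fintype X] [DecidableEq X] {g : FreeGroup X}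
    (hg : IsPrimitive g) (hcyc : FreeGroup.IsCyclicallyReduced g.toWord) (hlen : 2 ≤ g.norm) :
    ∃ (c : X × Bool) (A : Finset (X × Bool)), c ∉ A ∧ A.Nonempty ∧ (∃ d, d ∉ A ∧ d ≠ c) ∧
      g.toWord.IsChain (IsCutTransition c A) := by
  classical
  obtain ⟨b₀, V₀, E₀, h₀, hV₀⟩ := hg.exists_isMarkedGraph hcyc hlen
  obtain ⟨b, V, E, h, hV⟩ := h₀.exists_card_eq_two hV₀
  obtain ⟨c, hc⟩ := h.exists_inter_directions_subset hV
  obtain ⟨P, Q, hPQ, rfl⟩ := Finset.card_eq_two.1 hV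
  obtain ⟨a, ha, hac⟩ := (h.nontrivial P (by simp)).exists_ne c
  obtain ⟨d, hd, hdc⟩ := (h.nontrivial Q (by simp)).exists_ne c
  have hcPQ := hc P Q hPQ
  refine ⟨c, Finset.univ.filter fun l => l ∈ directions E P ∧ l ≠ c, by simp, ⟨a, by simp [ha, hac]⟩,
    ⟨d, ?_, hdc⟩, ?_⟩
  · simp only [Finset.mem_filter, Finset.mem_univ, true_and, not_and, not_not]
    exact fun hdP => hcPQ ⟨hdP, hd⟩
  · have hpath : ∀ (L : List (X × Bool)) (u v : ℕ), FreeGroup.IsReduced L → IsLabeledPath E u L v →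
        L.IsChain (IsCutTransition c
          (Finset.univ.filter fun l => l ∈ directions E P ∧ l ≠ c)) := by
      intro L
      induction L with
      | nil => simp
      | cons x L ih =>
        rintro u v hred ⟨p, hp, hL⟩
        cases L with
        | nil => simp
        | cons y L =>
          obtain ⟨hxy, hred⟩ := List.isChain_cons_cons.1 hred
          refine List.isChain_cons_cons.2 ⟨⟨ne_letterInv_iff.2 hxy, ?_⟩, ih p v hred hL⟩
          have hx : letterInv x ∈ directions E p := ⟨u, by rwa [letterEdge_letterInv]⟩
          obtain ⟨r, hr, -⟩ := hL
          have hy : y ∈ directions E p := ⟨r, hr⟩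
          by_cases hxc : letterInv x = c
          · exact .inl hxc
          by_cases hyc : y = c
          · exact .inr (.inl hyc)
          refine .inr (.inr ?_)
          have hpV := h.letterEdge_right_mem hp
          rcases Finset.mem_insert.1 hpV with rfl | hpQ
          · simp [hx, hy, hxc, hyc]
          · obtain rfl := Finset.mem_singleton.1 hpQ
            have h1 : letterInv x ∉ directions E P := fun hh => hxc (hcPQ ⟨hh, hx⟩)
            have h2 : y ∉ directions E P := fun hh => hyc (hcPQ ⟨hh, hy⟩)
            simp [h1, h2]
    exact hpath _ _ _ FreeGroup.isReduced_toWord h.closed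

end CutVertex

section ChainCount

variable {α : Type*} [Fintype α] [DecidableEq α] (R : α → α → Prop) [DecidableRel R]

/-- The lists `l` of length `k` such that `x :: l` is an `R`-chain. -/
def chainsFrom : ℕ → α → Finset (List α)
  | 0, _ => {[]}
  | k + 1, x => (Finset.univ.filter (R x)).biUnion fun y => (chainsFrom k y).image (List.cons y)

variable {R}

theorem mem_chainsFrom {k : ℕ} {x : α} {l : List α} :
    l ∈ chainsFrom R k x ↔ l.length = k ∧ (x :: l).IsChain R := by
  induction k generalizing x l with
  | zero => simp +contextual [chainsFrom, List.length_eq_zero_iff]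
  | succ k ih =>
    cases l with
    | nil => simp [chainsFrom]
    | cons y l => simp [chainsFrom, ih, and_left_comm]

theorem card_chainsFrom_succ (k : ℕ) (x : α) :
    (chainsFrom R (k + 1) x).card = ∑ y with R x y, (chainsFrom R k y).card := by
  rw [chainsFrom, Finset.card_biUnion]
  · exact Finset.sum_congr rfl fun y _ => Finset.card_image_of_injective _ List.cons_injective
  · intro y _ z _ hyz
    rw [Function.onFun, Finset.disjoint_left]
    intro l hl hl'
    obtain ⟨l₁, -, rfl⟩ := Finset.mem_image.1 hl
    obtain ⟨l₂, -, h⟩ := Finset.mem_image.1 hl'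
    exact hyz (List.cons.inj h).1.symm

theorem mul_card_chainsFrom_le {f : α → ℝ} {δ r : ℝ} (hr : 0 ≤ r) (hδ : ∀ x, δ ≤ f x)
    (hf : ∀ x, ∑ y with R x y, f y ≤ r * f x) (k : ℕ) (x : α) :
    δ * (chainsFrom R k x).card ≤ f x * r ^ k := by
  induction k generalizing x with
  | zero => simpa [chainsFrom] using hδ x
  | succ k ih =>
    rw [card_chainsFrom_succ, Nat.cast_sum, Finset.mul_sum]
    calc ∑ y with R x y, δ * ((chainsFrom R k y).card : ℝ)
        ≤ ∑ y with R x y, f y * r ^ k := Finset.sum_le_sum fun y _ => ih y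
      _ = (∑ y with R x y, f y) * r ^ k := by rw [Finset.sum_mul]
      _ ≤ (r * f x) * r ^ k := by gcongr; exact hf x
      _ = f x * r ^ (k + 1) := by ring

theorem pow_le_card_chainsFrom {d : ℕ} (hd : ∀ x, d ≤ (Finset.univ.filter (R x)).card) (k : ℕ)
    (x : α) : d ^ k ≤ (chainsFrom R k x).card := by
  induction k generalizing x with
  | zero => simp [chainsFrom]
  | succ k ih =>
    rw [card_chainsFrom_succ, pow_succ']
    calc d * d ^ k ≤ (Finset.univ.filter (R x)).card * d ^ k := by gcongr; exact hd x
      _ = ∑ y with R x y, d ^ k := by simp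
      _ ≤ _ := Finset.sum_le_sum fun y _ => ih y

end ChainCount

section CutWeight

variable {X : Type*} [Fintype X] [DecidableEq X]

instance (c : X × Bool) (A : Finset (X × Bool)) : DecidableRel (IsCutTransition c A) :=
  fun _ _ => inferInstanceAs (Decidable (_ ∧ _))

theorem isCutTransition_compl {c : X × Bool} {A : Finset (X × Bool)} {x y : X × Bool} :
    IsCutTransition c (insert c A)ᶜ x y ↔ IsCutTransition c A x y := by
  simp only [IsCutTransition, Finset.mem_compl, Finset.mem_insert]
  tauto

/-- A positive function witnessing that the transition matrix of `IsCutTransition c A` has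
spectral radius at most `n`. -/
def IsCutWeight (n : ℕ) (c : X × Bool) (A : Finset (X × Bool)) (f : X × Bool → ℝ) : Prop :=
  (∀ x, 1 / (n : ℝ) ≤ f x) ∧ (∀ x, f x ≤ 2) ∧ ∀ x, ∑ y with IsCutTransition c A x y, f y ≤ n * f x

theorem exists_isCutWeight_of_card {n : ℕ} (hn : 4 ≤ n) (hcard : Fintype.card (X × Bool) = n + 2)
    {c : X × Bool} {A : Finset (X × Bool)} (hc : c ∉ A)
    (hA : A.card < n ∨ A.card ≤ n ∧ letterInv c ∉ A)
    (hB : ((insert c A)ᶜ).card < n ∨ ((insert c A)ᶜ).card ≤ n ∧ letterInv c ∉ (insert c A)ᶜ) :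
    ∃ f, IsCutWeight n c A f := by
  have hn' : (4 : ℝ) ≤ n := by exact_mod_cast hn
  set ε : ℝ := 1 / (n - 1) with hε
  have hε0 : 0 < ε := by rw [hε]; apply one_div_pos.2; linarith
  have hε1 : ε * (n - 1) = 1 := by rw [hε]; field_simp [show (n : ℝ) - 1 ≠ 0 by linarith]
  have hε2 : ε ≤ 1 := by nlinarith
  have hn1 : 1 / (n : ℝ) ≤ 1 := by rw [div_le_one (by linarith)]; linarith
  have hsum : ∀ S : Finset (X × Bool), ∑ y ∈ S, (1 + if y = letterInv c then ε else 0) =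
      S.card + if letterInv c ∈ S then ε else 0 := by
    intro S
    simp [Finset.sum_add_distrib, Finset.sum_ite_eq']
  refine ⟨fun y => 1 + if y = letterInv c then ε else 0, fun x => ?_, fun x => ?_, fun x => ?_⟩
  · dsimp only; split <;> linarith
  · dsimp only; split <;> linarith
  rw [hsum]
  beta_reduce
  have side : ∀ B : Finset (X × Bool), c ∉ B → (B.card < n ∨ B.card ≤ n ∧ letterInv c ∉ B) →
      letterInv x ∈ B → (∀ y, IsCutTransition c B x y ↔ IsCutTransition c A x y) →
      ((Finset.univ.filter (IsCutTransition c A x)).card : ℝ) +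
        (if letterInv c ∈ Finset.univ.filter (IsCutTransition c A x) then ε else 0) ≤ n := by
    intro B hcB hB hx heq
    have hxc : letterInv x ≠ c := fun h => hcB (h ▸ hx)
    have hsub : Finset.univ.filter (IsCutTransition c A x) ⊆ insert c (B.erase (letterInv x)) := by
      intro y hy
      have hy := (heq y).2 (Finset.mem_filter.1 hy).2
      simp only [IsCutTransition, hxc, hx, false_or, true_iff] at hy
      simp only [Finset.mem_insert, Finset.mem_erase]
      tauto
    have hle : (Finset.univ.filter (IsCutTransition c A x)).card ≤ B.card := by
      refine (Finset.card_le_card hsub).trans ((Finset.card_insert_le _ _).trans ?_)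
      rw [Finset.card_erase_add_one hx]
    rcases hB with hB | ⟨hB, hcB'⟩
    · have : ((Finset.univ.filter (IsCutTransition c A x)).card : ℝ) + 1 ≤ n := by
        exact_mod_cast hle.trans_lt hB
      split <;> linarith
    · rw [if_neg]
      · rw [add_zero]; exact_mod_cast hle.trans hB
      · intro h
        have := hsub h
        simp only [Finset.mem_insert, Finset.mem_erase] at this
        rcases this with h | h
        · exact letterInv_ne_self c h
        · exact hcB' h.2
  by_cases hx : letterInv x = c
  · have hx' : x = letterInv c := letterInv_eq_iff.1 hx
    rw [if_pos hx']
    have hle : (Finset.univ.filter (IsCutTransition c A x)).card ≤ n + 1 := by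
      refine (Finset.card_le_card (t := Finset.univ.erase c) ?_).trans ?_
      · intro y hy
        have := (Finset.mem_filter.1 hy).2.1
        rw [hx] at this
        simpa using this
      · rw [Finset.card_erase_of_mem (Finset.mem_univ _), Finset.card_univ, hcard]
        omega
    have hle : ((Finset.univ.filter (IsCutTransition c A x)).card : ℝ) ≤ n + 1 := by
      exact_mod_cast hle
    have : (n : ℝ) * (1 + ε) = n + 1 + ε := by linarith
    split <;> linarith
  · rw [if_neg (fun h => hx (letterInv_eq_iff.2 h)), add_zero, mul_one]
    by_cases hxA : letterInv x ∈ A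
    · exact side A hc hA hxA fun _ => Iff.rfl
    · exact side _ (by simp) hB (by simp [hx, hxA]) fun _ => isCutTransition_compl

theorem exists_isCutWeight_singleton {n : ℕ} (hn : 4 ≤ n)
    (hcard : Fintype.card (X × Bool) = n + 2) {c a : X × Bool} (hac : a ≠ c)
    (hac' : a ≠ letterInv c) : ∃ f, IsCutWeight n c {a} f := by
  have hn' : (4 : ℝ) ≤ n := by exact_mod_cast hn
  have hn0 : (n : ℝ) ≠ 0 := by linarith
  set ε : ℝ := 1 / (n - 1) with hε
  set ν : ℝ := 1 / n with hν
  have hε1 : ε * (n - 1) = 1 := by rw [hε]; field_simp [show (n : ℝ) - 1 ≠ 0 by linarith]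
  have hν1 : ν * n = 1 := by rw [hν]; field_simp
  have hε0 : 0 < ε := by rw [hε]; apply one_div_pos.2; linarith
  have hν0 : 0 < ν := by rw [hν]; apply one_div_pos.2; linarith
  have hε2 : ε ≤ 1 / 3 := by nlinarith
  have hν2 : ν ≤ 1 / 4 := by nlinarith
  have hεν : 0 < ε * ν := mul_pos hε0 hν0
  have hεν' : ε * ν ≤ 1 / 3 := by nlinarith
  have hεν1 : n * (ε * ν) = ε := by linear_combination ε * hν1
  have hinv : letterInv a ≠ a := letterInv_ne_self a
  have hinvc : letterInv c ≠ c := letterInv_ne_self c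
  have hac'' : letterInv a ≠ c := fun h => hac' (letterInv_eq_iff.1 h)
  have hacinv : letterInv a ≠ letterInv c := fun h => hac (by
    rw [← letterInv_letterInv a, h, letterInv_letterInv])
  set f : X × Bool → ℝ := fun y => 1 + (if y = letterInv c then ε else 0) +
    (if y = a then ε * ν else 0) + (if y = letterInv a then ν - 1 else 0) with hf
  have hsum : ∀ S : Finset (X × Bool), ∑ y ∈ S, f y =
      S.card + (if letterInv c ∈ S then ε else 0) + (if a ∈ S then ε * ν else 0) +
        (if letterInv a ∈ S then ν - 1 else 0) := by
    intro S
    simp [hf, Finset.sum_add_distrib, Finset.sum_ite_eq']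
  have hbound : ∀ x, ν ≤ f x ∧ f x ≤ 2 := by
    intro x
    simp only [hf]
    by_cases h1 : x = letterInv a
    · simp only [h1, hacinv, hinv, if_true, if_false]
      constructor <;> linarith
    · simp only [h1, if_false]
      constructor <;> split <;> split <;> linarith
  refine ⟨f, fun x => (hbound x).1, fun x => (hbound x).2, fun x => ?_⟩
  rw [hsum]
  have hmem : ∀ y, y ∈ Finset.univ.filter (IsCutTransition c {a} x) ↔
      y ≠ letterInv x ∧ (letterInv x = c ∨ y = c ∨ (letterInv x = a ↔ y = a)) := by
    intro y
    simp [IsCutTransition]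
  have hcardle : ∀ s : Finset (X × Bool),
      (∀ y ∈ Finset.univ.filter (IsCutTransition c {a} x), y ∉ s) →
      ((Finset.univ.filter (IsCutTransition c {a} x)).card : ℝ) + s.card ≤ n + 2 := by
    intro s hs
    have := Finset.card_le_univ (Finset.univ.filter (IsCutTransition c {a} x) ∪ s)
    rw [Finset.card_union_of_disjoint (Finset.disjoint_left.2 hs), hcard] at this
    exact_mod_cast this
  by_cases hxc : x = letterInv c
  · have hxi : letterInv x = c := by rw [hxc, letterInv_letterInv]
    have h1 := hcardle {c} (by intro y hy; rw [hmem, hxi] at hy; simpa using hy.1)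
    have h2 : f x = 1 + ε := by simp [hf, hxc, hac'.symm, hacinv.symm]
    rw [if_pos ((hmem _).2 ⟨by rwa [hxi], .inl hxi⟩), if_pos ((hmem _).2 ⟨by rwa [hxi], .inl hxi⟩),
      if_pos ((hmem _).2 ⟨by rwa [hxi], .inl hxi⟩), h2]
    rw [Finset.card_singleton, Nat.cast_one] at h1
    linarith
  have hxi : letterInv x ≠ c := fun h => hxc (letterInv_eq_iff.1 h)
  by_cases hxa' : x = letterInv a
  · have hxia : letterInv x = a := by rw [hxa', letterInv_letterInv]
    have hN : Finset.univ.filter (IsCutTransition c {a} x) = {c} := by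
      ext y
      rw [hmem, hxia, Finset.mem_singleton]
      constructor
      · rintro ⟨h1, h | h | h⟩
        exacts [absurd h hac, h, absurd (h.1 rfl) h1]
      · rintro rfl
        exact ⟨hac.symm, .inr (.inl rfl)⟩
    have h2 : f x = ν := by simp [hf, hxa', hinv, hacinv]
    rw [hN, h2]
    simp [hinvc, hac, hac'', mul_comm (n : ℝ), hν1]
  have hxia : letterInv x ≠ a := fun h => hxa' (letterInv_eq_iff.1 h)
  have hmem' : ∀ y, y ∈ Finset.univ.filter (IsCutTransition c {a} x) ↔ y ≠ letterInv x ∧ y ≠ a := by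
    intro y
    rw [hmem]
    by_cases hyc : y = c
    · simp [hyc, hac.symm]
    · simp [hxi, hxia, hyc]
  have h1 := hcardle {a, letterInv x} (by
    intro y hy
    rw [hmem'] at hy
    simp [hy.1, hy.2])
  rw [Finset.card_pair hxia.symm, Nat.cast_ofNat] at h1
  rw [if_neg (c := a ∈ _) (fun h => ((hmem' _).1 h).2 rfl)]
  have hif : (if letterInv c ∈ Finset.univ.filter (IsCutTransition c {a} x) then ε else 0) ≤ ε := by
    split <;> linarith
  by_cases hxa : x = a
  · have h2 : f x = 1 + ε * ν := by simp [hf, hxa, hac', hinv.symm]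
    rw [if_neg (c := letterInv a ∈ _) (fun h => ((hmem' _).1 h).1 (by rw [hxa])), h2]
    linarith
  · have h2 : f x = 1 := by simp [hf, hxa, hxc, hxa']
    rw [if_pos (c := letterInv a ∈ _) ((hmem' _).2 ⟨fun h => hxa (by
      rw [← letterInv_letterInv x, ← h, letterInv_letterInv]), hinv⟩), h2]
    linarith

theorem exists_isCutWeight {n : ℕ} (hn : 4 ≤ n) (hcard : Fintype.card (X × Bool) = n + 2)
    {c : X × Bool} {A : Finset (X × Bool)} (hc : c ∉ A) (hA : A.Nonempty)
    (hd : ∃ d, d ∉ A ∧ d ≠ c) : ∃ f, IsCutWeight n c A f := by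
  have hB : ((insert c A)ᶜ).Nonempty := by
    obtain ⟨d, hdA, hdc⟩ := hd
    exact ⟨d, by simp [hdA, hdc]⟩
  have hAB : A.card + ((insert c A)ᶜ).card = n + 1 := by
    have h1 := Finset.card_compl_add_card (insert c A)
    rw [Finset.card_insert_of_notMem hc, hcard] at h1
    omega
  have hApos := hA.card_pos
  have hBpos := hB.card_pos
  by_cases h1 : A.card < n ∨ A.card ≤ n ∧ letterInv c ∉ A
  · by_cases h2 : ((insert c A)ᶜ).card < n ∨
      ((insert c A)ᶜ).card ≤ n ∧ letterInv c ∉ (insert c A)ᶜ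
    · exact exists_isCutWeight_of_card hn hcard hc h1 h2
    · have hA1 : A.card = 1 := by omega
      have hcB : letterInv c ∈ (insert c A)ᶜ := by
        by_contra hcB
        exact h2 (.inr ⟨by omega, hcB⟩)
      obtain ⟨a, rfl⟩ := Finset.card_eq_one.1 hA1
      simp only [Finset.mem_compl, Finset.mem_insert, Finset.mem_singleton, not_or] at hcB hc
      exact exists_isCutWeight_singleton hn hcard (Ne.symm hc) (Ne.symm hcB.2)
  · have hB1 : ((insert c A)ᶜ).card = 1 := by omega
    have hcA : letterInv c ∈ A := by
      by_contra hcA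
      exact h1 (.inr ⟨by omega, hcA⟩)
    obtain ⟨a, ha⟩ := Finset.card_eq_one.1 hB1
    have haB : a ∈ (insert c A)ᶜ := by simp [ha]
    simp only [Finset.mem_compl, Finset.mem_insert, not_or] at haB
    obtain ⟨f, h1, h2, h3⟩ := exists_isCutWeight_singleton hn hcard haB.1
      (fun h => haB.2 (h ▸ hcA))
    refine ⟨f, h1, h2, fun x => ?_⟩
    have := h3 x
    simp only [← ha, isCutTransition_compl] at this
    exact this

end CutWeight

section UpperBound

variable {X : Type*} [Fintype X] [DecidableEq X]

theorem finite_setOf_norm_eq (k : ℕ) : {g : FreeGroup X | g.norm = k}.Finite :=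
  Set.Finite.of_finite_image ((List.finite_length_eq (X × Bool) k).subset (by
    rintro _ ⟨g, hg, rfl⟩
    exact hg)) FreeGroup.toWord_injective.injOn

theorem finite_setOf_isPrimitive_norm_eq (k : ℕ) :
    {g : FreeGroup X | IsPrimitive g ∧ g.norm = k}.Finite :=
  (finite_setOf_norm_eq k).subset fun _ hg => hg.2

theorem card_chainsFrom_isCutTransition_le {n : ℕ} (hn : 4 ≤ n)
    (hcard : Fintype.card (X × Bool) = n + 2) {c : X × Bool} {A : Finset (X × Bool)} (hc : c ∉ A)
    (hA : A.Nonempty) (hd : ∃ d, d ∉ A ∧ d ≠ c) (k : ℕ) (x : X × Bool) :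
    ((chainsFrom (IsCutTransition c A) k x).card : ℝ) ≤ 2 * (n : ℝ) ^ (k + 1) := by
  obtain ⟨f, h1, h2, h3⟩ := exists_isCutWeight hn hcard hc hA hd
  have hn0 : (0 : ℝ) < n := by exact_mod_cast (by omega : 0 < n)
  have h := mul_card_chainsFrom_le hn0.le h1 h3 k x
  rw [one_div, inv_mul_le_iff₀ hn0] at h
  calc ((chainsFrom (IsCutTransition c A) k x).card : ℝ) ≤ n * (f x * n ^ k) := h
    _ ≤ n * (2 * n ^ k) := by gcongr; exact h2 x
    _ = 2 * (n : ℝ) ^ (k + 1) := by ring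

theorem exists_ncard_isCyclicallyReduced_le {n : ℕ} (hn : 4 ≤ n)
    (hcard : Fintype.card (X × Bool) = n + 2) :
    ∃ D : ℝ, 0 ≤ D ∧ ∀ k : ℕ, ({g : FreeGroup X | IsPrimitive g ∧
      FreeGroup.IsCyclicallyReduced g.toWord ∧ g.norm = k + 2}.ncard : ℝ) ≤ D * (n : ℝ) ^ (k + 2) := by
  set good : Finset ((X × Bool) × Finset (X × Bool)) := Finset.univ.filter fun p =>
    p.1 ∉ p.2 ∧ p.2.Nonempty ∧ ∃ d, d ∉ p.2 ∧ d ≠ p.1 with hgood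
  refine ⟨good.card * ((n + 2 : ℕ) * 2), by positivity, fun k => ?_⟩
  set T : Finset (FreeGroup X) := good.biUnion fun p => Finset.univ.biUnion fun x =>
    (chainsFrom (IsCutTransition p.1 p.2) (k + 1) x).image fun l => FreeGroup.mk (x :: l) with hT
  have hsub : {g : FreeGroup X | IsPrimitive g ∧ FreeGroup.IsCyclicallyReduced g.toWord ∧
      g.norm = k + 2} ⊆ T := by
    rintro g ⟨hg, hcyc, hnorm⟩
    obtain ⟨c, A, hc, hA, hd, hchain⟩ := hg.exists_isChain_isCutTransition hcyc (by omega)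
    obtain ⟨x, l, hl⟩ : ∃ x l, g.toWord = x :: l := by
      cases hw : g.toWord with
      | nil => simp [FreeGroup.norm, hw] at hnorm
      | cons x l => exact ⟨x, l, rfl⟩
    have hlen : l.length = k + 1 := by simpa [FreeGroup.norm, hl] using hnorm
    simp only [hT, Finset.coe_biUnion, Set.mem_iUnion, Finset.mem_coe, Finset.mem_image]
    exact ⟨(c, A), Finset.mem_filter.2 ⟨Finset.mem_univ _, hc, hA, hd⟩, x, Finset.mem_univ _, l,
      mem_chainsFrom.2 ⟨hlen, hl ▸ hchain⟩, by rw [← hl, FreeGroup.mk_toWord]⟩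
  have hle := Set.ncard_le_ncard hsub T.finite_toSet
  rw [Set.ncard_coe_finset] at hle
  have hp : ∀ p ∈ good, (((Finset.univ.biUnion fun x =>
      (chainsFrom (IsCutTransition p.1 p.2) (k + 1) x).image fun l => FreeGroup.mk (x :: l)).card :
        ℕ) : ℝ) ≤ (n + 2 : ℕ) * 2 * (n : ℝ) ^ (k + 2) := by
    intro p hp
    obtain ⟨-, hc, hA, hd⟩ := Finset.mem_filter.1 hp
    have hx : ∀ x ∈ (Finset.univ : Finset (X × Bool)),
        ((((chainsFrom (IsCutTransition p.1 p.2) (k + 1) x).image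
          fun l => FreeGroup.mk (x :: l)).card : ℕ) : ℝ) ≤ 2 * (n : ℝ) ^ (k + 2) := fun x _ =>
      (Nat.cast_le.2 Finset.card_image_le).trans
        (card_chainsFrom_isCutTransition_le hn hcard hc hA hd (k + 1) x)
    calc _ ≤ _ := Nat.cast_le.2 Finset.card_biUnion_le
      _ ≤ ∑ x : X × Bool, 2 * (n : ℝ) ^ (k + 2) := by
        rw [Nat.cast_sum]
        exact Finset.sum_le_sum hx
      _ = _ := by rw [Finset.sum_const, Finset.card_univ, hcard, nsmul_eq_mul]; ring
  calc _ ≤ (T.card : ℝ) := Nat.cast_le.2 hle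
    _ ≤ _ := Nat.cast_le.2 Finset.card_biUnion_le
    _ ≤ ∑ p ∈ good, (n + 2 : ℕ) * 2 * (n : ℝ) ^ (k + 2) := by
      rw [Nat.cast_sum]
      exact Finset.sum_le_sum hp
    _ = _ := by rw [Finset.sum_const, nsmul_eq_mul]; ring

theorem exists_conj_of_not_isCyclicallyReduced {α : Type*} [DecidableEq α] {g : FreeGroup α} {k : ℕ}
    (hk : g.norm = k + 2) (hg : ¬ FreeGroup.IsCyclicallyReduced g.toWord) :
    ∃ (x : α × Bool) (h : FreeGroup α), h.norm = k ∧
      g = FreeGroup.mk [x] * h * (FreeGroup.mk [x])⁻¹ := by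
  obtain ⟨x, M, y, hw⟩ : ∃ x M y, g.toWord = x :: M ++ [y] := by
    cases hw : g.toWord with
    | nil => simp [FreeGroup.norm, hw] at hk
    | cons x l =>
      rcases List.eq_nil_or_concat' l with rfl | ⟨M, y, rfl⟩
      · simp [FreeGroup.norm, hw] at hk
      · exact ⟨x, M, y, by simp⟩
  have hred : FreeGroup.IsReduced (x :: M ++ [y]) := hw ▸ FreeGroup.isReduced_toWord
  rw [hw, FreeGroup.isCyclicallyReduced_cons_append_iff, and_iff_right hred,
    ← ne_letterInv_iff, not_not] at hg
  have hM : FreeGroup.IsReduced M := (List.IsChain.left_of_append hred).tail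
  refine ⟨x, FreeGroup.mk M, ?_, ?_⟩
  · rw [FreeGroup.norm, FreeGroup.toWord_mk, hM.reduce_eq]
    simpa [FreeGroup.norm, hw] using hk
  · have hy : [y] = FreeGroup.invRev [x] := by
      rw [← letterInv_letterInv y, ← hg]
      rfl
    rw [← FreeGroup.mk_toWord (x := g), hw, FreeGroup.inv_mk, FreeGroup.mul_mk, FreeGroup.mul_mk,
      ← hy, List.singleton_append]

theorem ncard_isPrimitive_norm_add_two_le (k : ℕ) :
    {g : FreeGroup X | IsPrimitive g ∧ g.norm = k + 2}.ncard ≤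
      {g : FreeGroup X | IsPrimitive g ∧ FreeGroup.IsCyclicallyReduced g.toWord ∧
        g.norm = k + 2}.ncard +
      Fintype.card (X × Bool) * {g : FreeGroup X | IsPrimitive g ∧ g.norm = k}.ncard := by
  set C : Set (FreeGroup X) := {g | IsPrimitive g ∧ FreeGroup.IsCyclicallyReduced g.toWord ∧
    g.norm = k + 2}
  set P : Set (FreeGroup X) := {g | IsPrimitive g ∧ g.norm = k}
  set f : (X × Bool) × FreeGroup X → FreeGroup X :=
    fun p => FreeGroup.mk [p.1] * p.2 * (FreeGroup.mk [p.1])⁻¹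
  have hP : P.Finite := finite_setOf_isPrimitive_norm_eq k
  have hPf : ((Set.univ : Set (X × Bool)) ×ˢ P).Finite := Set.finite_univ.prod hP
  have hC : C.Finite := (finite_setOf_norm_eq (k + 2)).subset fun _ hg => hg.2.2
  have hsub : {g : FreeGroup X | IsPrimitive g ∧ g.norm = k + 2} ⊆
      C ∪ f '' ((Set.univ : Set (X × Bool)) ×ˢ P) := by
    rintro g ⟨hg, hk⟩
    by_cases hcyc : FreeGroup.IsCyclicallyReduced g.toWord
    · exact .inl ⟨hg, hcyc, hk⟩
    · obtain ⟨x, h, hh, rfl⟩ := exists_conj_of_not_isCyclicallyReduced hk hcyc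
      refine .inr ⟨(x, h), ⟨Set.mem_univ _, ?_, hh⟩, rfl⟩
      have := hg.conj (FreeGroup.mk [x])⁻¹
      rwa [inv_inv, show (FreeGroup.mk [x])⁻¹ * (FreeGroup.mk [x] * h * (FreeGroup.mk [x])⁻¹) *
        FreeGroup.mk [x] = h by group] at this
  calc _ ≤ _ := Set.ncard_le_ncard hsub (hC.union (hPf.image f))
    _ ≤ _ := Set.ncard_union_le _ _
    _ ≤ _ := by
      gcongr
      refine (Set.ncard_image_le hPf).trans ?_
      rw [Set.ncard_prod, Set.ncard_univ, Nat.card_eq_fintype_card]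

theorem exists_ncard_isPrimitive_le {n : ℕ} (hn : 4 ≤ n)
    (hcard : Fintype.card (X × Bool) = n + 2) :
    ∃ C : ℝ, 0 < C ∧ ∀ k : ℕ,
      ({g : FreeGroup X | IsPrimitive g ∧ g.norm = k}.ncard : ℝ) ≤ C * (n : ℝ) ^ k := by
  obtain ⟨D, hD0, hD⟩ := exists_ncard_isCyclicallyReduced_le hn hcard
  set p : ℕ → ℝ := fun k => ({g : FreeGroup X | IsPrimitive g ∧ g.norm = k}.ncard : ℝ) with hp
  have hn' : (4 : ℝ) ≤ n := by exact_mod_cast hn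
  set C : ℝ := 2 * D + p 0 + p 1 + 1 with hC
  have hp0 : ∀ k, 0 ≤ p k := fun k => Nat.cast_nonneg _
  have hC0 : 0 < C := by linarith [hp0 0, hp0 1]
  refine ⟨C, hC0, fun k => ?_⟩
  induction k using Nat.twoStepInduction with
  | zero =>
    change p 0 ≤ _
    linarith [hp0 0, hp0 1, pow_zero (n : ℝ)]
  | one =>
    change p 1 ≤ _
    rw [pow_one]
    nlinarith [hp0 0, hp0 1]
  | more k ih _ =>
    have h := ncard_isPrimitive_norm_add_two_le (X := X) k
    rw [hcard, ← Nat.cast_le (α := ℝ)] at h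
    push_cast at h
    have hpow : (0 : ℝ) < (n : ℝ) ^ k := by positivity
    calc p (k + 2) ≤ D * (n : ℝ) ^ (k + 2) + (n + 2) * (C * n ^ k) := by
          refine h.trans (add_le_add (hD k) ?_)
          gcongr
      _ = (D * n ^ 2 + C * (n + 2)) * n ^ k := by ring
      _ ≤ (C * n ^ 2) * n ^ k := by
          gcongr
          have h1 : D * (n : ℝ) ^ 2 ≤ C / 2 * n ^ 2 := by
            gcongr
            linarith [hp0 0, hp0 1]
          have h2 : C * ((n : ℝ) + 2) ≤ C * (n ^ 2 / 2) := by
            gcongr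
            nlinarith
          linarith
      _ = C * (n : ℝ) ^ (k + 2) := by ring

end UpperBound

section LowerBound

variable {X : Type*}

theorem isPrimitive_of_mul_mk [DecidableEq X] {x : X} {L : List (X × Bool)}
    (hL : ∀ l ∈ L, l.1 ≠ x) : IsPrimitive (FreeGroup.of x * FreeGroup.mk L) := by
  have hfix : ∀ h : FreeGroup X,
      FreeGroup.lift (Function.update FreeGroup.of x h) (FreeGroup.mk L) = FreeGroup.mk L := by
    intro h
    induction L with
    | nil => rw [← FreeGroup.one_eq_mk, map_one]
    | cons l L ih =>
      obtain ⟨y, c⟩ := l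
      have hy : y ≠ x := hL _ List.mem_cons_self
      rw [← List.singleton_append, ← FreeGroup.mul_mk, map_mul,
        ih fun l hl => hL l (List.mem_cons_of_mem _ hl)]
      congr 1
      cases c
      · simp [hy, FreeGroup.of, FreeGroup.invRev]
      · simp [hy, FreeGroup.of]
  set w : FreeGroup X := FreeGroup.mk L
  set φ : FreeGroup X →* FreeGroup X :=
    FreeGroup.lift (Function.update FreeGroup.of x (FreeGroup.of x * w)) with hφ
  set ψ : FreeGroup X →* FreeGroup X :=
    FreeGroup.lift (Function.update FreeGroup.of x (FreeGroup.of x * w⁻¹)) with hψ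
  have hφx : φ (FreeGroup.of x) = FreeGroup.of x * w := by simp [hφ]
  have hψx : ψ (FreeGroup.of x) = FreeGroup.of x * w⁻¹ := by simp [hψ]
  have hφw : φ w = w := hfix _
  have hψw : ψ w = w := hfix _
  have h1 : ψ.comp φ = MonoidHom.id _ := by
    ext y
    by_cases hy : y = x
    · subst hy
      simp [hφx, hψx, hψw]
    · simp [hφ, hψ, hy]
  have h2 : φ.comp ψ = MonoidHom.id _ := by
    ext y
    by_cases hy : y = x
    · subst hy
      simp [hφx, hψx, hφw]
    · simp [hφ, hψ, hy]
  have h := IsPrimitive.of_mulEquiv (MonoidHom.toMulEquiv φ ψ h1 h2) x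
  rwa [MonoidHom.toMulEquiv_apply, hφx] at h

theorem pow_le_ncard_isPrimitive [Fintype X] [DecidableEq X] (x : X) (k : ℕ) :
    (2 * Fintype.card X - 3) ^ k ≤
      {g : FreeGroup X | IsPrimitive g ∧ g.norm = k + 1}.ncard := by
  set R : X × Bool → X × Bool → Prop := fun a b => b.1 ≠ x ∧ (a.1 = b.1 → a.2 = b.2)
  have hd : ∀ a, 2 * Fintype.card X - 3 ≤ (Finset.univ.filter (R a)).card := by
    intro a
    have hsub : ({(x, true), (x, false), letterInv a} : Finset (X × Bool))ᶜ ⊆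
        Finset.univ.filter (R a) := by
      rintro ⟨y, c⟩ hb
      simp only [Finset.mem_compl, Finset.mem_insert, Finset.mem_singleton, not_or] at hb
      refine Finset.mem_filter.2 ⟨Finset.mem_univ _, ?_, ne_letterInv_iff.1 hb.2.2⟩
      rintro rfl
      cases c
      exacts [hb.2.1 rfl, hb.1 rfl]
    refine le_trans ?_ (Finset.card_le_card hsub)
    rw [Finset.card_compl, Fintype.card_prod, Fintype.card_bool, mul_comm]
    exact Nat.sub_le_sub_left Finset.card_le_three _
  refine (pow_le_card_chainsFrom hd k (x, true)).trans ?_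
  have hred : ∀ l ∈ chainsFrom R k (x, true), FreeGroup.IsReduced ((x, true) :: l) := fun l hl =>
    (mem_chainsFrom.1 hl).2.imp fun _ _ h => h.2
  rw [← Set.ncard_coe_finset]
  refine Set.ncard_le_ncard_of_injOn (fun l => FreeGroup.mk ((x, true) :: l)) ?_ ?_
    (finite_setOf_isPrimitive_norm_eq (k + 1))
  · intro l hl
    have hl := Finset.mem_coe.1 hl
    refine ⟨?_, ?_⟩
    · have hne : ∀ b ∈ l, b.1 ≠ x := by
        have hchain : ∀ (a : X × Bool) (l : List (X × Bool)), (a :: l).IsChain R →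
            ∀ b ∈ l, b.1 ≠ x := by
          intro a l
          induction l generalizing a with
          | nil => simp
          | cons b l ih =>
            intro h c hc
            obtain ⟨h1, h2⟩ := List.isChain_cons_cons.1 h
            rcases List.mem_cons.1 hc with rfl | hc
            exacts [h1.1, ih b h2 c hc]
        exact hchain _ l (mem_chainsFrom.1 hl).2
      have := isPrimitive_of_mul_mk hne
      rwa [FreeGroup.of, FreeGroup.mul_mk, List.singleton_append] at this
    · rw [FreeGroup.norm, FreeGroup.toWord_mk, (hred l hl).reduce_eq, List.length_cons,
        (mem_chainsFrom.1 hl).1]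
  · intro l hl l' hl' h
    have h := FreeGroup.reduce.sound h
    rw [(hred l hl).reduce_eq, (hred l' hl').reduce_eq] at h
    exact (List.cons.inj h).2

end LowerBound

/-- For `q ≥ 3`, the number `P(q,k)` of primitive elements of free length `k` of the
free group of rank `q` satisfies `c₁·(2q−3)^k ≤ P(q,k) ≤ c₂·(2q−2)^k` for some
constants `c₁, c₂ > 0` and all `k ≥ 1`. -/
theorem card_primitive_freeGroup_bounds (q : ℕ) (hq : 3 ≤ q) :
    ∃ c₁ c₂ : ℝ, 0 < c₁ ∧ 0 < c₂ ∧ ∀ k : ℕ, 1 ≤ k →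
      c₁ * ((2 * (q : ℝ) - 3) ^ k) ≤
        ({g : FreeGroup (Fin q) | IsPrimitive g ∧ g.norm = k}.ncard : ℝ) ∧
      ({g : FreeGroup (Fin q) | IsPrimitive g ∧ g.norm = k}.ncard : ℝ) ≤
        c₂ * ((2 * (q : ℝ) - 2) ^ k) := by
  obtain ⟨C, hC0, hC⟩ := exists_ncard_isPrimitive_le (X := Fin q) (n := 2 * q - 2) (by omega)
    (by rw [Fintype.card_prod, Fintype.card_fin, Fintype.card_bool]; omega)
  have hq' : (3 : ℝ) ≤ q := by exact_mod_cast hq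
  have hpos : (0 : ℝ) < 2 * q - 3 := by linarith
  refine ⟨(2 * (q : ℝ) - 3)⁻¹, C, inv_pos.2 hpos, hC0, fun k hk => ⟨?_, ?_⟩⟩
  · obtain ⟨k, rfl⟩ := Nat.exists_eq_add_of_le' hk
    have h := pow_le_ncard_isPrimitive (⟨0, by omega⟩ : Fin q) k
    rw [Fintype.card_fin, ← Nat.cast_le (α := ℝ), Nat.cast_pow, Nat.cast_sub (by omega)] at h
    push_cast at h
    rwa [pow_succ', inv_mul_cancel_left₀ hpos.ne']
  · have h := hC k
    rw [Nat.cast_sub (by omega)] at h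
    exact_mod_cast h
end
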